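/- arXiv:2109.13888 — 3 statements merged into one kernel-verified Lean document; each statement's English description precedes it below -/
import Mathlib

section
/- Let σ ∈ S₄ be the permutation with σ(1)=4, σ(2)=3, σ(3)=1, σ(4)=2 (complete notation [4312]). The set BL_σ ⊂ Lo¹₄ has exactly 16 connected components, and every connected component of BL_σ is contractible. -/
open Matrix

/-- The group `Lo¹_m` of real lower triangular `m × m` matrices with
all diagonal entries equal to `1`, viewed as a subset of the matrix space. -/
def Lo1 (m : ℕ) : Set (Matrix (Fin m) (Fin m) ℝ) :=
  {L | (∀ i, L i i = 1) ∧ ∀ i j : Fin m, i < j → L i j = 0}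

/-- The set of invertible real upper triangular `m × m` matrices. -/
def UpInv (m : ℕ) : Set (Matrix (Fin m) (Fin m) ℝ) :=
  {U | (∀ i j : Fin m, j < i → U i j = 0) ∧ IsUnit U.det}

/-- The permutation matrix of `σ`, with `(P_σ)_{i, σ(i)} = 1` and `0` otherwise. -/
def permMat (m : ℕ) (σ : Equiv.Perm (Fin m)) : Matrix (Fin m) (Fin m) ℝ :=
  fun i j => if σ i = j then 1 else 0

/-- The Bruhat cell `Bru_σ^GL = { U₀ P_σ U₁ : U₀, U₁ upper triangular invertible }`. -/
def Bru (m : ℕ) (σ : Equiv.Perm (Fin m)) : Set (Matrix (Fin m) (Fin m) ℝ) :=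
  {M | ∃ U₀ ∈ UpInv m, ∃ U₁ ∈ UpInv m, M = U₀ * permMat m σ * U₁}

/-- `BL_σ = Lo¹ ∩ Bru_σ^GL`. -/
def BL (m : ℕ) (σ : Equiv.Perm (Fin m)) : Set (Matrix (Fin m) (Fin m) ℝ) :=
  Lo1 m ∩ Bru m σ

/-- The permutation `[4312] ∈ S₄` (in `1`-indexed complete notation), i.e.
`σ(1) = 4, σ(2) = 3, σ(3) = 1, σ(4) = 2`, written `0`-indexed on `Fin 4`. -/
def σ4312 : Equiv.Perm (Fin 4) :=
  ⟨![3, 2, 0, 1], ![2, 3, 1, 0], by decide, by decide⟩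

/-!
The southwest minors of a matrix are multiplied by nonzero scalars under left and right
multiplication by invertible upper triangular matrices, so they cut out the conditions `L₄₁ = 0`,
`L₃₁ ≠ 0`, `L₄₂ ≠ 0` and the nonvanishing of the southwest `3 × 3` minor; column operations show
that these conditions suffice. Rescaling the entries of `L` identifies `BL_σ` with
`ℝˣ × ℝˣ × {(x, y, z) | x y z ≠ x + y}`. The last factor is symmetric under negation, and on the
side `x + y < x y z` the minimum of `x` and `y` never vanishes. For either sign of the minimum, the
possible `(x, y)` form a contractible set, over which the fibres are convex and
`z = c / min x y` is a section for a suitable constant `c`. Hence there are `2 * 2 * (2 * 2)`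
components, all contractible.
-/

open Set Topology

section Components

variable {X Y T : Type*} [TopologicalSpace X] [TopologicalSpace Y] [TopologicalSpace T]

theorem connectedComponent_eq_fiber [TotallyDisconnectedSpace T] {f : X → T} (hf : Continuous f)
    (hfib : ∀ t, IsPreconnected (f ⁻¹' {t})) (x : X) : connectedComponent x = f ⁻¹' {f x} := by
  refine Subset.antisymm (fun y hy ↦ ?_) ((hfib (f x)).subset_connectedComponent rfl)
  rw [mem_preimage, ← hf.image_connectedComponent_eq_singleton x]
  exact mem_image_of_mem f hy

/-- The connected components of `X` are contractible and there are `n` of them. The count is an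
extended natural number, so that an infinite number of components does not count as zero. -/
structure HasContractibleComponents (n : ℕ∞) (X : Type*) [TopologicalSpace X] : Prop where
  card_eq : ENat.card (ConnectedComponents X) = n
  contractibleSpace (x : X) : ContractibleSpace (connectedComponent x)

namespace HasContractibleComponents

variable {m n : ℕ∞}

theorem of_fibers [TotallyDisconnectedSpace T] {f : X → T} (hf : Continuous f)
    (hfib : ∀ t, ContractibleSpace (f ⁻¹' {t})) :
    HasContractibleComponents (ENat.card T) X := by
  have hcomp := connectedComponent_eq_fiber hf fun t ↦
    isPreconnected_iff_preconnectedSpace.2 inferInstance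
  refine ⟨ENat.card_congr (Equiv.ofBijective hf.connectedComponentsLift ⟨?_, fun t ↦ ?_⟩),
    fun x ↦ hcomp x ▸ hfib (f x)⟩
  · refine ConnectedComponents.surjective_coe.forall₂.2 fun x y hxy ↦ ?_
    rw [ConnectedComponents.coe_eq_coe', hcomp y]
    exact hxy
  · obtain ⟨⟨x, hx⟩⟩ : Nonempty (f ⁻¹' {t}) := inferInstance
    exact ⟨x, hx⟩

theorem of_contractibleSpace [ContractibleSpace X] : HasContractibleComponents 1 X := by
  have hfib (t : Unit) : ContractibleSpace ((fun _ : X ↦ ()) ⁻¹' {t}) := by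
    rw [preimage_const_of_mem (mem_singleton t)]
    exact (Homeomorph.Set.univ X).contractibleSpace
  simpa using of_fibers continuous_const hfib

theorem contractibleSpace_fiber_mk (h : HasContractibleComponents n X)
    (t : ConnectedComponents X) : ContractibleSpace (ConnectedComponents.mk ⁻¹' {t}) := by
  obtain ⟨x, rfl⟩ := ConnectedComponents.surjective_coe t
  rw [connectedComponents_preimage_singleton]
  exact h.contractibleSpace x

theorem of_homeomorph (h : HasContractibleComponents n Y) (e : X ≃ₜ Y) :
    HasContractibleComponents n X := by
  rw [← h.card_eq]
  refine of_fibers (f := ConnectedComponents.mk ∘ e)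
    (ConnectedComponents.continuous_coe.comp e.continuous) fun t ↦ ?_
  have := h.contractibleSpace_fiber_mk t
  exact (e.subtype fun _ ↦ Iff.rfl :
    ((ConnectedComponents.mk ∘ e) ⁻¹' {t}) ≃ₜ (ConnectedComponents.mk ⁻¹' {t})).contractibleSpace

theorem prod (hX : HasContractibleComponents m X) (hY : HasContractibleComponents n Y) :
    HasContractibleComponents (m * n) (X × Y) := by
  rw [← hX.card_eq, ← hY.card_eq, ← ENat.card_prod]
  refine of_fibers (f := Prod.map ConnectedComponents.mk ConnectedComponents.mk)
    (ConnectedComponents.continuous_coe.prodMap ConnectedComponents.continuous_coe) ?_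
  rintro ⟨s, t⟩
  have := hX.contractibleSpace_fiber_mk s
  have := hY.contractibleSpace_fiber_mk t
  rw [← singleton_prod_singleton, preimage_prod_map_prod]
  exact (Homeomorph.Set.prod _ _).contractibleSpace

theorem sum (hX : HasContractibleComponents m X) (hY : HasContractibleComponents n Y) :
    HasContractibleComponents (m + n) (X ⊕ Y) := by
  rw [← hX.card_eq, ← hY.card_eq, ← ENat.card_sum]
  refine of_fibers (f := Sum.map ConnectedComponents.mk ConnectedComponents.mk)
    (ConnectedComponents.continuous_coe.sumMap ConnectedComponents.continuous_coe) ?_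
  rintro (s | t)
  · have := hX.contractibleSpace_fiber_mk s
    have himage : Sum.map ConnectedComponents.mk ConnectedComponents.mk ⁻¹' {Sum.inl s} =
        (Sum.inl '' (ConnectedComponents.mk ⁻¹' {s}) : Set (X ⊕ Y)) := by
      ext (x | y) <;> simp
    rw [himage]
    exact (IsEmbedding.inl.homeomorphImage _).symm.contractibleSpace
  · have := hY.contractibleSpace_fiber_mk t
    have himage : Sum.map ConnectedComponents.mk ConnectedComponents.mk ⁻¹' {Sum.inr t} =
        (Sum.inr '' (ConnectedComponents.mk ⁻¹' {t}) : Set (X ⊕ Y)) := by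
      ext (x | y) <;> simp
    rw [himage]
    exact (IsEmbedding.inr.homeomorphImage _).symm.contractibleSpace

theorem union {A B : Set X} (hA : HasContractibleComponents m A)
    (hB : HasContractibleComponents n B) (hAo : IsOpen A) (hBo : IsOpen B) (hAB : Disjoint A B) :
    HasContractibleComponents (m + n) ↥(A ∪ B) := by
  have hinj : Function.Injective (Sum.elim Subtype.val Subtype.val : A ⊕ B → X) :=
    Subtype.val_injective.sumElim Subtype.val_injective fun a b ↦ hAB.ne_of_mem a.2 b.2
  have hemb := (hAo.isOpenEmbedding_subtypeVal.sumElim hBo.isOpenEmbedding_subtypeVal hinj)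
  have hrange : range (Sum.elim Subtype.val Subtype.val : A ⊕ B → X) = A ∪ B := by
    rw [Sum.elim_range, Subtype.range_val, Subtype.range_val]
  exact (hA.sum hB).of_homeomorph
    (hemb.isEmbedding.toHomeomorph.trans (Homeomorph.setCongr hrange)).symm

theorem of_sign {A : Set X} (hA : IsOpen A) {g : X → ℝ} (hg : Continuous g)
    (hg0 : ∀ x ∈ A, g x ≠ 0) (hneg : HasContractibleComponents m ↥(A ∩ {x | g x < 0}))
    (hpos : HasContractibleComponents n ↥(A ∩ {x | 0 < g x})) :
    HasContractibleComponents (m + n) A := by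
  have hcover : A ∩ {x | g x < 0} ∪ A ∩ {x | 0 < g x} = A := by
    rw [← inter_union_distrib_left, inter_eq_left]
    exact fun x hx ↦ (hg0 x hx).lt_or_gt
  have hdisj : Disjoint {x | g x < 0} {x | 0 < g x} :=
    disjoint_left.2 fun x (hx : g x < 0) (hx' : 0 < g x) ↦ hx.asymm hx'
  rw [← hcover]
  exact hneg.union hpos (hA.inter (isOpen_lt hg continuous_const))
    (hA.inter (isOpen_lt continuous_const hg)) (hdisj.mono inter_subset_right inter_subset_right)

theorem setOf_ne_zero {g : X → ℝ} (hg : Continuous g)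
    (hneg : HasContractibleComponents m {x | g x < 0})
    (hpos : HasContractibleComponents n {x | 0 < g x}) :
    HasContractibleComponents (m + n) {x | g x ≠ 0} := by
  have hneg_subset : {x | g x < 0} ⊆ {x | g x ≠ 0} := fun x (hx : g x < 0) ↦ hx.ne
  have hpos_subset : {x | 0 < g x} ⊆ {x | g x ≠ 0} := fun x (hx : 0 < g x) ↦ hx.ne'
  rw [← inter_eq_right.2 hneg_subset] at hneg
  rw [← inter_eq_right.2 hpos_subset] at hpos
  exact of_sign (isOpen_ne_fun hg continuous_const) hg (fun _ hx ↦ hx) hneg hpos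

theorem neg [InvolutiveNeg X] [ContinuousNeg X] {A : Set X}
    (hA : HasContractibleComponents n A) : HasContractibleComponents n ↥(-A) :=
  hA.of_homeomorph ((Homeomorph.neg X).subtype fun _ ↦ Iff.rfl)

end HasContractibleComponents

theorem contractibleSpace_of_starConvex_fibers {E : Type*} [AddCommGroup E] [Module ℝ E]
    [TopologicalSpace E] [ContinuousAdd E] [ContinuousSMul ℝ E] {B : Set X}
    [ContractibleSpace B] {S : Set (X × E)} {s : X → E} (hs : ContinuousOn s B)
    (hSB : ∀ p ∈ S, p.1 ∈ B) (hsS : ∀ b ∈ B, (b, s b) ∈ S)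
    (hstar : ∀ b ∈ B, StarConvex ℝ (s b) {v | (b, v) ∈ S}) : ContractibleSpace S := by
  have hsB : Continuous fun b : B ↦ s b := hs.domRestrict
  have hsp : Continuous fun p : S ↦ s p.1.1 := hsB.comp (f := fun p : S ↦ (⟨p.1.1, hSB p p.2⟩ : B))
    (by fun_prop)
  have hpush (t : unitInterval) (p : S) :
      (p.1.1, (t : ℝ) • s p.1.1 + (1 - t : ℝ) • p.1.2) ∈ S :=
    hstar p.1.1 (hSB p p.2) p.2 t.2.1 (sub_nonneg.2 t.2.2) (add_sub_cancel _ _)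
  have hsq : Continuous fun q : unitInterval × S ↦ s q.2.1.1 := hsp.comp continuous_snd
  let pushHomotopy : C(unitInterval × S, S) := ⟨fun q ↦ ⟨_, hpush q.1 q.2⟩,
    .subtype_mk (.prodMk (by fun_prop) (.add (.smul (by fun_prop) hsq) (by fun_prop))) _⟩
  let proj : C(S, B) := ⟨fun p ↦ ⟨p.1.1, hSB p p.2⟩, by fun_prop⟩
  let sect : C(B, S) :=
    ⟨fun b ↦ ⟨(b, s b), hsS b b.2⟩, (continuous_subtype_val.prodMk hsB).subtype_mk _⟩
  have hleft : (sect.comp proj).Homotopic (.id S) :=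
    .symm ⟨⟨pushHomotopy, fun p ↦ by simp [pushHomotopy], fun p ↦ by
      simp [pushHomotopy, sect, proj]⟩⟩
  have hright : proj.comp sect = .id B := rfl
  exact ContinuousMap.HomotopyEquiv.contractibleSpace
    ⟨proj, sect, hleft, hright ▸ .refl _⟩

end Components

section Cubic

theorem hasContractibleComponents_real_ne_zero :
    HasContractibleComponents 2 {x : ℝ | x ≠ 0} := by
  have := (convex_Iio (0 : ℝ)).contractibleSpace nonempty_Iio
  have := (convex_Ioi (0 : ℝ)).contractibleSpace nonempty_Ioi
  rw [← one_add_one_eq_two]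
  exact .setOf_ne_zero continuous_id (.of_contractibleSpace (X := Iio (0 : ℝ)))
    (.of_contractibleSpace (X := Ioi (0 : ℝ)))

/-- The polynomial `x y z - x - y` in the point `((x, y), z)`: the value of the southwest `3 × 3`
minor of a matrix in `BL 4 σ4312`, in the coordinates of `BL4312Homeomorph`. -/
def cubic (p : (ℝ × ℝ) × ℝ) : ℝ := p.1.1 * p.1.2 * p.2 - p.1.1 - p.1.2

theorem continuous_cubic : Continuous cubic := by
  unfold cubic
  fun_prop

theorem cubic_neg (p : (ℝ × ℝ) × ℝ) : cubic (-p) = -cubic p := by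
  simp only [cubic, Prod.fst_neg, Prod.snd_neg]
  ring

theorem min_ne_zero_of_cubic_pos {p : (ℝ × ℝ) × ℝ} (hp : 0 < cubic p) :
    min p.1.1 p.1.2 ≠ 0 := by
  intro hmin
  have hprod : p.1.1 * p.1.2 = 0 := by rw [← min_mul_max, hmin, zero_mul]
  have hx : 0 ≤ p.1.1 := hmin ▸ min_le_left _ _
  have hy : 0 ≤ p.1.2 := hmin ▸ min_le_right _ _
  rw [cubic, hprod, zero_mul] at hp
  linarith

theorem cubic_div_min (c : ℝ) {q : ℝ × ℝ} (hmin : min q.1 q.2 ≠ 0) :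
    cubic (q, c / min q.1 q.2) = c * max q.1 q.2 - q.1 - q.2 := by
  simp only [cubic]
  rw [← min_mul_max q.1 q.2, mul_right_comm, mul_div_cancel₀ _ hmin]

theorem convex_cubic_pos_fiber (q : ℝ × ℝ) : Convex ℝ {z | 0 < cubic (q, z)} := by
  have hlinear : IsLinearMap ℝ fun z ↦ q.1 * q.2 * z := (LinearMap.mulLeft ℝ (q.1 * q.2)).isLinear
  have hfiber : {z | 0 < cubic (q, z)} = {z | q.1 + q.2 < q.1 * q.2 * z} := by
    ext z
    simp only [cubic, mem_ofPred_eq, sub_sub, sub_pos]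
  rw [hfiber]
  exact convex_halfSpace_gt hlinear _

theorem contractibleSpace_cubic_pos_inter {B : Set (ℝ × ℝ)} [ContractibleSpace B] {c : ℝ}
    (hmin : ∀ q ∈ B, min q.1 q.2 ≠ 0) (hc : ∀ q ∈ B, q.1 + q.2 < c * max q.1 q.2) :
    ContractibleSpace ↥({p | 0 < cubic p} ∩ {p | p.1 ∈ B}) := by
  have hsection (q : ℝ × ℝ) (hq : q ∈ B) : 0 < cubic (q, c / min q.1 q.2) := by
    rw [cubic_div_min c (hmin q hq)]
    linarith [hc q hq]
  refine contractibleSpace_of_starConvex_fibers (B := B) (s := fun q ↦ c / min q.1 q.2)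
    (continuousOn_const.div (by fun_prop) hmin) (fun p hp ↦ hp.2)
    (fun q hq ↦ ⟨hsection q hq, hq⟩) fun q hq ↦ ?_
  simpa [hq] using (convex_cubic_pos_fiber q).starConvex (hsection q hq)

theorem contractibleSpace_min_pos : ContractibleSpace {q : ℝ × ℝ | 0 < min q.1 q.2} := by
  have hprod : {q : ℝ × ℝ | 0 < min q.1 q.2} = Ioi 0 ×ˢ Ioi 0 := by ext; simp
  rw [hprod]
  exact ((convex_Ioi 0).prod (convex_Ioi 0)).contractibleSpace ⟨(1, 1), by simp⟩

theorem contractibleSpace_min_neg : ContractibleSpace {q : ℝ × ℝ | min q.1 q.2 < 0} := by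
  have hunion : {q : ℝ × ℝ | min q.1 q.2 < 0} = Iio 0 ×ˢ univ ∪ univ ×ˢ Iio 0 := by ext; simp
  have hstar : StarConvex ℝ (-1, -1) {q : ℝ × ℝ | min q.1 q.2 < 0} := by
    rw [hunion]
    exact (((convex_Iio 0).prod convex_univ).starConvex (by simp)).union
      ((convex_univ.prod (convex_Iio 0)).starConvex (by simp))
  exact hstar.contractibleSpace ⟨(-1, -1), by simp⟩

theorem hasContractibleComponents_cubic_pos :
    HasContractibleComponents 2 {p | 0 < cubic p} := by
  have := contractibleSpace_min_pos
  have := contractibleSpace_min_neg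
  have hneg : ContractibleSpace ↥({p | 0 < cubic p} ∩ {p | min p.1.1 p.1.2 < 0}) :=
    contractibleSpace_cubic_pos_inter (B := {q | min q.1 q.2 < 0}) (c := 1)
      (fun q hq ↦ ne_of_lt hq) fun q (hq : min q.1 q.2 < 0) ↦ by linarith [min_add_max q.1 q.2]
  have hpos : ContractibleSpace ↥({p | 0 < cubic p} ∩ {p | 0 < min p.1.1 p.1.2}) :=
    contractibleSpace_cubic_pos_inter (B := {q | 0 < min q.1 q.2}) (c := 3)
      (fun q hq ↦ ne_of_gt hq) fun q (hq : 0 < min q.1 q.2) ↦ by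
        linarith [min_add_max q.1 q.2, min_le_max (a := q.1) (b := q.2)]
  rw [← one_add_one_eq_two]
  exact .of_sign (isOpen_lt continuous_const continuous_cubic) (g := fun p ↦ min p.1.1 p.1.2)
    (by fun_prop) (fun p hp ↦ min_ne_zero_of_cubic_pos hp) .of_contractibleSpace
    .of_contractibleSpace

theorem hasContractibleComponents_cubic_ne_zero :
    HasContractibleComponents 4 {p | cubic p ≠ 0} := by
  have hneg : {p | cubic p < 0} = -{p | 0 < cubic p} := by ext; simp [cubic_neg]
  rw [← two_add_two_eq_four]
  exact .setOf_ne_zero continuous_cubic (hneg ▸ hasContractibleComponents_cubic_pos.neg)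
    hasContractibleComponents_cubic_pos

end Cubic

section Bruhat

variable {R : Type*} [CommRing R] {m : ℕ}

theorem submatrix_mul_of_support {S ι κ l n p : Type*} [NonUnitalNonAssocSemiring S]
    [Fintype ι] [Fintype n] {A : Matrix l n S} {B : Matrix n p S} (e : κ → l) {r : ι → n}
    (hr : Function.Injective r) (c : κ → p) (h : ∀ a b, ∀ i ∉ range r, A (e a) i * B i (c b) = 0) :
    (A * B).submatrix e c = A.submatrix e r * B.submatrix r c := by
  ext a b
  exact (Fintype.sum_of_injective r hr _ _ (h a b) fun _ ↦ rfl).symm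

/-- The southwest `k × k` minor of `M`, on the last `k` rows and the first `k` columns. The ranks
of such corner blocks are constant on Bruhat cells. -/
def southwestMinor (M : Matrix (Fin m) (Fin m) R) (k : ℕ) (hk : k ≤ m) : R :=
  (M.submatrix (fun i : Fin k ↦ ⟨m - k + i, by omega⟩) (Fin.castLE hk)).det

theorem southwestMinor_fin_four_one (M : Matrix (Fin 4) (Fin 4) R) :
    southwestMinor M 1 (by decide) = M 3 0 := det_fin_one _

theorem southwestMinor_fin_four_two (M : Matrix (Fin 4) (Fin 4) R) :
    southwestMinor M 2 (by decide) = M 2 0 * M 3 1 - M 2 1 * M 3 0 := det_fin_two _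

theorem southwestMinor_fin_four_three (M : Matrix (Fin 4) (Fin 4) R) :
    southwestMinor M 3 (by decide) =
      M 1 0 * M 2 1 * M 3 2 - M 1 0 * M 2 2 * M 3 1 - M 1 1 * M 2 0 * M 3 2 +
        M 1 1 * M 2 2 * M 3 0 + M 1 2 * M 2 0 * M 3 1 - M 1 2 * M 2 1 * M 3 0 := det_fin_three _

theorem southwestMinor_mul_mul {U V : Matrix (Fin m) (Fin m) R} (hU : U.IsUpperTriangular)
    (hV : V.IsUpperTriangular) (M : Matrix (Fin m) (Fin m) R) {k : ℕ} (hk : k ≤ m) :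
    southwestMinor (U * M * V) k hk = (∏ i : Fin k, U ⟨m - k + i, by omega⟩ ⟨m - k + i, by omega⟩) *
      southwestMinor M k hk * ∏ i : Fin k, V (i.castLE hk) (i.castLE hk) := by
  let r : Fin k → Fin m := fun i ↦ ⟨m - k + i, by omega⟩
  have hr : StrictMono r := fun i j hij ↦ by simpa [r] using hij
  have hc : StrictMono (Fin.castLE hk) := Fin.strictMono_castLE hk
  have hUr : (U.submatrix r r).IsUpperTriangular := fun i j hij ↦ hU (hr hij)
  have hVc : (V.submatrix (Fin.castLE hk) (Fin.castLE hk)).IsUpperTriangular :=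
    fun i j hij ↦ hV (hc hij)
  have hUM : (U * M).submatrix r (Fin.castLE hk) =
      U.submatrix r r * M.submatrix r (Fin.castLE hk) := by
    refine submatrix_mul_of_support r hr.injective _ fun a b i hi ↦ ?_
    refine mul_eq_zero_of_left (hU (lt_of_not_ge fun hle ↦ ?_)) _
    have : m - k + a.val ≤ i.val := hle
    exact hi ⟨⟨i - (m - k), by omega⟩, Fin.ext (by simp [r]; omega)⟩
  have hMV : (U * M * V).submatrix r (Fin.castLE hk) =
      (U * M).submatrix r (Fin.castLE hk) * V.submatrix (Fin.castLE hk) (Fin.castLE hk) := by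
    refine submatrix_mul_of_support r hc.injective _ fun a b i hi ↦ ?_
    refine mul_eq_zero_of_right _ (hV (lt_of_not_ge fun hle ↦ ?_))
    have : i.val ≤ b.val := hle
    exact hi ⟨⟨i, by omega⟩, rfl⟩
  change ((U * M * V).submatrix r (Fin.castLE hk)).det = _
  rw [hMV, hUM, det_mul, det_mul, det_of_isUpperTriangular hUr, det_of_isUpperTriangular hVc]
  rfl

theorem mem_UpInv_iff {U : Matrix (Fin m) (Fin m) ℝ} :
    U ∈ UpInv m ↔ U.IsUpperTriangular ∧ ∀ i, U i i ≠ 0 := by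
  refine and_congr_right fun hU ↦ ?_
  have hU' : U.IsUpperTriangular := fun i j hij ↦ hU i j hij
  rw [det_of_isUpperTriangular hU', isUnit_iff_ne_zero, Finset.prod_ne_zero_iff]
  simp

theorem inv_mem_UpInv {V : Matrix (Fin m) (Fin m) ℝ} (hV : V ∈ UpInv m) : V⁻¹ ∈ UpInv m := by
  have := V.invertibleOfIsUnitDet hV.2
  exact ⟨fun i j hij ↦ blockTriangular_inv_of_blockTriangular (b := id) (fun i j ↦ hV.1 i j) hij,
    V.isUnit_nonsing_inv_det hV.2⟩

theorem mem_Bru_of_mul_eq {σ : Equiv.Perm (Fin m)} {M U V : Matrix (Fin m) (Fin m) ℝ}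
    (hU : U ∈ UpInv m) (hV : V ∈ UpInv m) (h : M * V = U * permMat m σ) : M ∈ Bru m σ :=
  ⟨U, hU, V⁻¹, inv_mem_UpInv hV, by rw [← h, mul_nonsing_inv_cancel_right _ _ hV.2]⟩

theorem southwestMinor_eq_zero_iff_of_mem_Bru {σ : Equiv.Perm (Fin m)}
    {M : Matrix (Fin m) (Fin m) ℝ} (hM : M ∈ Bru m σ) {k : ℕ} (hk : k ≤ m) :
    southwestMinor M k hk = 0 ↔ southwestMinor (permMat m σ) k hk = 0 := by
  obtain ⟨U, hU, V, hV, rfl⟩ := hM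
  rw [mem_UpInv_iff] at hU hV
  rw [southwestMinor_mul_mul hU.1 hV.1]
  simp [Finset.prod_eq_zero_iff, hU.2, hV.2]

end Bruhat

section BL4312

/-- The `4 × 4` lower unitriangular matrix with southwest corner `0` and remaining entries below the
diagonal `a, b, c, e, f`, read by rows: the shape of every matrix in `BL 4 σ4312`. -/
def cornerFree (a b c e f : ℝ) : Matrix (Fin 4) (Fin 4) ℝ :=
  !![1, 0, 0, 0; a, 1, 0, 0; b, c, 1, 0; 0, e, f, 1]

theorem continuous_cornerFree {X : Type*} [TopologicalSpace X] {a b c e f : X → ℝ}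
    (ha : Continuous a) (hb : Continuous b) (hc : Continuous c) (he : Continuous e)
    (hf : Continuous f) : Continuous fun x ↦ cornerFree (a x) (b x) (c x) (e x) (f x) :=
  continuous_matrix fun i j ↦ by
    fin_cases i <;> fin_cases j <;> simp [cornerFree, continuous_const, ha, hb, hc, he, hf]

theorem cornerFree_mem_Lo1 (a b c e f : ℝ) : cornerFree a b c e f ∈ Lo1 4 := by
  simp [Lo1, cornerFree, Fin.forall_fin_succ]

theorem eq_cornerFree {L : Matrix (Fin 4) (Fin 4) ℝ} (hL : L ∈ Lo1 4) (hcorner : L 3 0 = 0) :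
    L = cornerFree (L 1 0) (L 2 0) (L 2 1) (L 3 1) (L 3 2) := by
  ext i j
  fin_cases i <;> fin_cases j <;> simp [cornerFree, hL.1, hL.2, hcorner]

theorem cornerFree_mem_Bru {a b c e f : ℝ} (hb : b ≠ 0) (he : e ≠ 0)
    (hd : a * c * f - a * e - b * f ≠ 0) : cornerFree a b c e f ∈ Bru 4 σ4312 := by
  -- The column operations `V` clear the last two entries of the third column and the last three
  -- entries of the fourth column.
  obtain ⟨β, hβ⟩ : ∃ β, e * β + f = 0 := ⟨-f / e, by field_simp; ring⟩
  obtain ⟨α, hα⟩ : ∃ α, b * α + c * β + 1 = 0 := ⟨-(c * β + 1) / b, by field_simp; ring⟩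
  obtain ⟨δ, hδ⟩ : ∃ δ, (a * c * f - a * e - b * f) * δ = -1 := ⟨_, mul_div_cancel₀ _ hd⟩
  let U : Matrix (Fin 4) (Fin 4) ℝ := !![δ, α, 1, 0; 0, a * α + β, a, 1; 0, 0, b, c; 0, 0, 0, e]
  let V : Matrix (Fin 4) (Fin 4) ℝ :=
    !![1, 0, α, δ; 0, 1, β, -(a * δ); 0, 0, 1, (a * c - b) * δ; 0, 0, 0, 1]
  have hδ0 : δ ≠ 0 := right_ne_zero_of_mul (hδ.trans_ne (by norm_num))
  have hdiag : a * α + β ≠ 0 := by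
    refine right_ne_zero_of_mul (a := b * e) (ne_of_eq_of_ne ?_ hd)
    linear_combination a * e * hα + (b - a * c) * hβ
  have hU : U ∈ UpInv 4 := by
    rw [mem_UpInv_iff]
    simp [Matrix.IsUpperTriangular, BlockTriangular, U, Fin.forall_fin_succ, hb, he, hδ0, hdiag]
  have hV : V ∈ UpInv 4 := by
    rw [mem_UpInv_iff]
    simp [Matrix.IsUpperTriangular, BlockTriangular, V, Fin.forall_fin_succ]
  have hthird : b * δ + -(c * (a * δ)) + (a * c - b) * δ = 0 := by ring
  have hfourth : -(e * (a * δ)) + f * ((a * c - b) * δ) + 1 = 0 := by linear_combination hδ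
  refine mem_Bru_of_mul_eq hU hV ?_
  ext i j
  fin_cases i <;> fin_cases j <;>
    simp [cornerFree, U, V, permMat, σ4312, mul_apply, Fin.sum_univ_four, hα, hβ, hthird, hfourth]

theorem mem_BL4312_iff {L : Matrix (Fin 4) (Fin 4) ℝ} :
    L ∈ BL 4 σ4312 ↔ L ∈ Lo1 4 ∧ L 3 0 = 0 ∧ L 2 0 ≠ 0 ∧ L 3 1 ≠ 0 ∧
      L 1 0 * L 2 1 * L 3 2 - L 1 0 * L 3 1 - L 2 0 * L 3 2 ≠ 0 := by
  refine ⟨fun ⟨hLo, hBru⟩ ↦ ?_, fun ⟨hLo, hcorner, hb, he, hd⟩ ↦ ⟨hLo, ?_⟩⟩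
  · have hone := southwestMinor_eq_zero_iff_of_mem_Bru hBru (k := 1) (by decide)
    have htwo := southwestMinor_eq_zero_iff_of_mem_Bru hBru (k := 2) (by decide)
    have hthree := southwestMinor_eq_zero_iff_of_mem_Bru hBru (k := 3) (by decide)
    rw [southwestMinor_fin_four_one, southwestMinor_fin_four_one] at hone
    rw [southwestMinor_fin_four_two, southwestMinor_fin_four_two] at htwo
    rw [southwestMinor_fin_four_three, southwestMinor_fin_four_three] at hthree
    have h12 : L 1 2 = 0 := hLo.2 _ _ (by decide)
    have hcorner : L 3 0 = 0 := hone.2 (by simp [permMat, σ4312])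
    have hbe : ¬(L 2 0 = 0 ∨ L 3 1 = 0) := by simpa [permMat, σ4312, hcorner] using htwo
    obtain ⟨hb, he⟩ := not_or.1 hbe
    exact ⟨hLo, hcorner, hb, he, by simpa [permMat, σ4312, hcorner, hLo.1, h12] using hthree⟩
  · rw [eq_cornerFree hLo hcorner]
    exact cornerFree_mem_Bru hb he hd

theorem cubic_mul_mul_div {a b c e f : ℝ} (hb : b ≠ 0) (he : e ≠ 0) :
    cubic ((a * e, f * b), c / (e * b)) = a * c * f - a * e - b * f := by
  simp only [cubic]
  field_simp

theorem cornerFree_mem_BL4312 {e b x y z : ℝ} (he : e ≠ 0) (hb : b ≠ 0)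
    (hxyz : cubic ((x, y), z) ≠ 0) :
    cornerFree (x / e) b (z * (e * b)) e (y / b) ∈ BL 4 σ4312 := by
  refine ⟨cornerFree_mem_Lo1 .., cornerFree_mem_Bru hb he ?_⟩
  rwa [← cubic_mul_mul_div hb he, div_mul_cancel₀ _ he, div_mul_cancel₀ _ hb,
    mul_div_cancel_right₀ _ (mul_ne_zero he hb)]

/-- The coordinates `e = L₄₂`, `b = L₃₁`, `x = L₂₁ e`, `y = L₄₃ b`, `z = L₃₂ / (e b)` on
`BL 4 σ4312`, which turn its southwest `3 × 3` minor into `x y z - x - y`. -/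
noncomputable def BL4312Homeomorph :
    ↥(BL 4 σ4312) ≃ₜ {x : ℝ | x ≠ 0} × {x : ℝ | x ≠ 0} × {p | cubic p ≠ 0} where
  toFun L :=
    have hL := mem_BL4312_iff.1 L.2
    (⟨L.1 3 1, hL.2.2.2.1⟩, ⟨L.1 2 0, hL.2.2.1⟩,
      ⟨((L.1 1 0 * L.1 3 1, L.1 3 2 * L.1 2 0), L.1 2 1 / (L.1 3 1 * L.1 2 0)), by
        rw [mem_ofPred_eq, cubic_mul_mul_div hL.2.2.1 hL.2.2.2.1]
        exact hL.2.2.2.2⟩)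
  invFun q :=
    ⟨cornerFree (q.2.2.1.1.1 / q.1) q.2.1 (q.2.2.1.2 * (q.1 * q.2.1)) q.1 (q.2.2.1.1.2 / q.2.1),
      cornerFree_mem_BL4312 q.1.2 q.2.1.2 q.2.2.2⟩
  left_inv L := by
    obtain ⟨hLo, hcorner, hb, he, -⟩ := mem_BL4312_iff.1 L.2
    refine Subtype.ext ?_
    rw [eq_cornerFree hLo hcorner]
    simp [cornerFree, hb, he]
  right_inv := by
    rintro ⟨⟨e, he : e ≠ 0⟩, ⟨b, hb : b ≠ 0⟩, p⟩
    ext <;> simp [cornerFree, he, hb]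
  continuous_toFun := by
    have hentry (i j : Fin 4) : Continuous fun L : ↥(BL 4 σ4312) ↦ L.1 i j :=
      continuous_subtype_val.matrix_elem i j
    have hne (L : ↥(BL 4 σ4312)) : L.1 3 1 * L.1 2 0 ≠ 0 :=
      have hL := mem_BL4312_iff.1 L.2
      mul_ne_zero hL.2.2.2.1 hL.2.2.1
    exact ((hentry 3 1).subtype_mk _).prodMk (((hentry 2 0).subtype_mk _).prodMk
      (((((hentry 1 0).mul (hentry 3 1)).prodMk ((hentry 3 2).mul (hentry 2 0))).prodMk
        ((hentry 2 1).div ((hentry 3 1).mul (hentry 2 0)) hne)).subtype_mk _))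
  continuous_invFun :=
    .subtype_mk (continuous_cornerFree (.div (by fun_prop) (by fun_prop) fun q ↦ q.1.2)
      (by fun_prop) (by fun_prop) (by fun_prop)
      (.div (by fun_prop) (by fun_prop) fun q ↦ q.2.1.2)) _

theorem hasContractibleComponents_BL4312 : HasContractibleComponents 16 ↥(BL 4 σ4312) := by
  have h16 : (2 * (2 * 4) : ℕ∞) = 16 := by norm_num
  exact h16 ▸ (hasContractibleComponents_real_ne_zero.prod
    (hasContractibleComponents_real_ne_zero.prod
      hasContractibleComponents_cubic_ne_zero)).of_homeomorph BL4312Homeomorph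

end BL4312

/-- `BL_{[4312]} ⊂ Lo¹₄` has exactly 16 connected components,
all of which are contractible. -/
theorem stmt2 :
    Nat.card (ConnectedComponents ↥(BL 4 σ4312)) = 16 ∧
      ∀ L : ↥(BL 4 σ4312), ContractibleSpace ↥(connectedComponent L) := by
  have h := hasContractibleComponents_BL4312
  refine ⟨?_, h.contractibleSpace⟩
  rw [Nat.card, ← Cardinal.toNat_toENat]
  exact congrArg ENat.toNat h.card_eq
end

section
/- Let η ∈ S₄ be the longest permutation, η(i) = 5 − i for all i (complete notation [4321]). The set BL_η ⊂ Lo¹₄ has exactly 20 connected components, and every connected component of BL_η is contractible. -/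
/-!
A matrix of `Lo1 4` lies in the open Bruhat cell iff its lower left minors do not vanish. Dividing
out the first two of them, which are arbitrary nonzero numbers, identifies `BL 4 η4` with
`ℝˣ × ℝˣ × {x ∈ ℝ⁴ : K₄(x) ≠ 0}`, where `K₄` is the signed continuant.

The complex solution of `zₖ₊₁ = xₖ zₖ - zₖ₋₁` with `z₋₁ = -i` and `z₀ = 1` has `Re zₙ = Kₙ`, and
conservation of the Wronskian `Im (conj zₖ * zₖ₊₁) = 1` means that it turns at each step by an angle
`δₖ ∈ (0, π)`. The `δₖ` are coordinates: `cot δₖ = Re (conj zₖ * zₖ₊₁)` is affine in `xₖ`, with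
slope `|zₖ|² ≠ 0`. As `zₙ` has argument `∑ δₖ`, the set `Kₙ ≠ 0` becomes the complement in
`(0, π)ⁿ` of the hyperplanes `∑ δₖ = π/2 + kπ`, which consists of `n + 1` convex pieces. For `n = 4`
this gives `2 * 2 * 5` contractible components.
-/

open Matrix

/-- The longest permutation `η = [4321] ∈ S₄`, `η(i) = 5 − i`
(here `0`-indexed on `Fin 4`). -/
def η4 : Equiv.Perm (Fin 4) :=
  ⟨![3, 2, 1, 0], ![3, 2, 1, 0], by decide, by decide⟩

section LU

variable {K : Type*} [Field K] {k n : ℕ}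

/-- The leading `k × k` block of a square matrix; its determinant is the `k`-th leading principal
minor. -/
def leadingBlock (A : Matrix (Fin n) (Fin n) K) (h : k ≤ n) : Matrix (Fin k) (Fin k) K :=
  A.submatrix (Fin.castLE h) (Fin.castLE h)

theorem sum_univ_eq_sum_castLE {M : Type*} [AddCommMonoid M] (h : k ≤ n) {f : Fin n → M}
    (hf : ∀ i : Fin n, k ≤ i → f i = 0) : ∑ i, f i = ∑ i : Fin k, f (Fin.castLE h i) :=
  (Fintype.sum_of_injective (Fin.castLE h) (Fin.castLE_injective h) _ f
    (fun i hi ↦ hf i (not_lt.1 fun hik ↦ hi ⟨⟨i, hik⟩, rfl⟩)) fun _ ↦ rfl).symm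

theorem leadingBlock_mul {L : Matrix (Fin n) (Fin n) K} (hL : L.IsLowerTriangular)
    (U : Matrix (Fin n) (Fin n) K) (h : k ≤ n) :
    leadingBlock (L * U) h = leadingBlock L h * leadingBlock U h := by
  ext i j
  refine sum_univ_eq_sum_castLE h fun t ht ↦ ?_
  have hLt : L (Fin.castLE h i) t = 0 :=
    hL (OrderDual.toDual_lt_toDual.2 (Fin.lt_def.2 (i.2.trans_le ht)))
  simp only [hLt, zero_mul]

theorem det_leadingBlock_ne_zero_of_isUpperTriangular {U : Matrix (Fin n) (Fin n) K}
    (hU : U.IsUpperTriangular) (hdet : U.det ≠ 0) (h : k ≤ n) : (leadingBlock U h).det ≠ 0 := by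
  have hblock : (leadingBlock U h).IsUpperTriangular := fun _ _ hij ↦ hU hij
  rw [det_of_isUpperTriangular hU, Finset.prod_ne_zero_iff] at hdet
  rw [det_of_isUpperTriangular hblock, Finset.prod_ne_zero_iff]
  exact fun i _ ↦ hdet _ (Finset.mem_univ _)

theorem exists_unitLowerTriangular_mul_isUpperTriangular {A : Matrix (Fin n) (Fin n) K}
    (hA : ∀ k (h : k < n), (leadingBlock A h.le).det ≠ 0) :
    ∃ L : Matrix (Fin n) (Fin n) K, L.IsLowerTriangular ∧ (∀ i, L i i = 1) ∧
      (L * A).IsUpperTriangular := by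
  have row (i : Fin n) : ∃ c : Fin i → K, c ᵥ* leadingBlock A i.2.le =
      fun j ↦ A i (Fin.castLE i.2.le j) :=
    vecMul_surjective_iff_isUnit.2
      ((isUnit_iff_isUnit_det _).2 (hA i i.2).isUnit) _
  choose c hc using row
  refine ⟨1 - of fun i j ↦ if h : j < i then c i ⟨j, h⟩ else 0, ?_, ?_, ?_⟩
  · intro i j hij
    replace hij : i < j := hij
    simp [hij.not_gt, hij.ne]
  · simp
  · intro i j hij
    replace hij : j < i := hij
    have hcij : ∑ t : Fin i, c i t * A (Fin.castLE i.2.le t) j = A i j :=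
      congrFun (hc i) ⟨j, hij⟩
    rw [sub_mul, one_mul, Matrix.sub_apply, mul_apply, sum_univ_eq_sum_castLE i.2.le, sub_eq_zero,
      ← hcij]
    · have hlt (t : Fin i) : Fin.castLE i.2.le t < i := t.2
      simp [hlt]
    · intro t ht
      simp [Fin.le_def.2 ht]

theorem exists_eq_lowerTriangular_mul_upperTriangular_iff {A : Matrix (Fin n) (Fin n) K} :
    (∃ L U : Matrix (Fin n) (Fin n) K, (L.IsLowerTriangular ∧ IsUnit L.det) ∧
      (U.IsUpperTriangular ∧ IsUnit U.det) ∧ A = L * U) ↔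
      ∀ k (h : k ≤ n), (leadingBlock A h).det ≠ 0 := by
  constructor
  · rintro ⟨L, U, ⟨hL, hLdet⟩, ⟨hU, hUdet⟩, rfl⟩ k h
    have hLblock : (leadingBlock L h).det ≠ 0 := by
      rw [← det_transpose]
      exact det_leadingBlock_ne_zero_of_isUpperTriangular hL.transpose
        (by rwa [det_transpose, ← isUnit_iff_ne_zero]) h
    rw [leadingBlock_mul hL, det_mul]
    exact mul_ne_zero hLblock (det_leadingBlock_ne_zero_of_isUpperTriangular hU hUdet.ne_zero h)
  · intro hA
    obtain ⟨L, hL, hL1, hLA⟩ := exists_unitLowerTriangular_mul_isUpperTriangular fun k h ↦ hA k h.le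
    have hLdet : L.det = 1 := by simp [det_of_isLowerTriangular L hL, hL1]
    have : Invertible L := invertibleOfIsUnitDet L (hLdet ▸ isUnit_one)
    refine ⟨L⁻¹, L * A, ⟨blockTriangular_inv_of_blockTriangular hL, ?_⟩, ⟨hLA, ?_⟩, ?_⟩
    · simp [hLdet]
    · rw [det_mul, hLdet, one_mul]
      exact (hA n le_rfl).isUnit
    · rw [inv_mul_cancel_left_of_invertible]

end LU

section OpenBruhatCell

variable {m : ℕ}

theorem permMat_eq_submatrix_one (σ : Equiv.Perm (Fin m)) :
    permMat m σ = (1 : Matrix (Fin m) (Fin m) ℝ).submatrix σ id := by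
  ext i j
  simp [permMat, one_apply]

theorem submatrix_rev_mul_permMat_revPerm_mul (A B : Matrix (Fin m) (Fin m) ℝ) :
    (A * permMat m Fin.revPerm * B).submatrix Fin.rev id = A.submatrix Fin.rev Fin.rev * B := by
  rw [permMat_eq_submatrix_one, mul_submatrix_one]
  rfl

theorem submatrix_rev_mem_UpInv_iff {L : Matrix (Fin m) (Fin m) ℝ} :
    L.submatrix Fin.rev Fin.rev ∈ UpInv m ↔ L.IsLowerTriangular ∧ IsUnit L.det := by
  refine and_congr ⟨fun h i j hij ↦ ?_, fun h i j hij ↦ h (Fin.rev_lt_rev.2 hij)⟩ ?_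
  · simpa using h i.rev j.rev (Fin.rev_lt_rev.2 hij)
  · exact iff_of_eq (congrArg IsUnit (det_submatrix_equiv_self Fin.revPerm L))

theorem mem_Bru_revPerm_iff {M : Matrix (Fin m) (Fin m) ℝ} :
    M ∈ Bru m Fin.revPerm ↔
      ∀ k (h : k ≤ m), (leadingBlock (M.submatrix Fin.rev id) h).det ≠ 0 := by
  rw [← exists_eq_lowerTriangular_mul_upperTriangular_iff]
  constructor
  · rintro ⟨U₀, hU₀, U₁, hU₁, rfl⟩
    exact ⟨U₀.submatrix Fin.rev Fin.rev, U₁,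
      submatrix_rev_mem_UpInv_iff.1 (by simpa [Fin.rev_involutive.comp_self] using hU₀), hU₁,
      submatrix_rev_mul_permMat_revPerm_mul U₀ U₁⟩
  · rintro ⟨L, U, hL, hU, hM⟩
    refine ⟨L.submatrix Fin.rev Fin.rev, submatrix_rev_mem_UpInv_iff.2 hL, U, hU, ?_⟩
    have hinj : Function.Injective fun N : Matrix (Fin m) (Fin m) ℝ ↦ N.submatrix Fin.rev id :=
      fun N N' h ↦ by simpa [Fin.rev_involutive.comp_self] using congrArg (submatrix · Fin.rev id) h
    refine hinj ?_
    simp [hM, submatrix_rev_mul_permMat_revPerm_mul, Fin.rev_involutive.comp_self]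

theorem η4_eq_revPerm : η4 = Fin.revPerm := by
  decide

theorem mem_Lo1_four_iff {L : Matrix (Fin 4) (Fin 4) ℝ} :
    L ∈ Lo1 4 ↔ L = !![1, 0, 0, 0; L 1 0, 1, 0, 0; L 2 0, L 2 1, 1, 0; L 3 0, L 3 1, L 3 2, 1] := by
  refine ⟨fun ⟨h1, h0⟩ ↦ ?_, fun h ↦ ?_⟩
  · ext i j
    fin_cases i <;> fin_cases j <;> simp [h1, h0]
  · rw [h]
    constructor <;> simp [Fin.forall_fin_succ]

theorem det_submatrix_rev_ne_zero_of_mem_Lo1 {L : Matrix (Fin m) (Fin m) ℝ} (hL : L ∈ Lo1 m) :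
    (L.submatrix Fin.rev id).det ≠ 0 := by
  have hLdet : L.det = 1 := by simp [det_of_isLowerTriangular L fun i j ↦ hL.2 i j, hL.1]
  have hperm := det_permute Fin.revPerm L
  rw [hLdet, mul_one] at hperm
  exact hperm.trans_ne (by exact_mod_cast Units.ne_zero _)

theorem mem_BL_η4_iff {L : Matrix (Fin 4) (Fin 4) ℝ} :
    L ∈ BL 4 η4 ↔ L ∈ Lo1 4 ∧ L 3 0 ≠ 0 ∧ L 2 0 * L 3 1 - L 2 1 * L 3 0 ≠ 0 ∧
      L 1 0 * L 2 1 * L 3 2 - L 1 0 * L 3 1 - L 2 0 * L 3 2 + L 3 0 ≠ 0 := by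
  rw [BL, Set.mem_inter_iff, η4_eq_revPerm, mem_Bru_revPerm_iff]
  refine and_congr_right fun hL ↦ ?_
  set N := L.submatrix Fin.rev id
  have minor_one : (leadingBlock N (show 1 ≤ 4 by lia)).det = L 3 0 := det_fin_one _
  have minor_two : (leadingBlock N (show 2 ≤ 4 by lia)).det =
      -(L 2 0 * L 3 1 - L 2 1 * L 3 0) := by
    refine (det_fin_two _).trans ?_
    change L 3 0 * L 2 1 - L 3 1 * L 2 0 = _
    ring
  have minor_three : (leadingBlock N (show 3 ≤ 4 by lia)).det =
      -(L 1 0 * L 2 1 * L 3 2 - L 1 0 * L 3 1 - L 2 0 * L 3 2 + L 3 0) := by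
    refine (det_fin_three _).trans ?_
    change L 3 0 * L 2 1 * L 1 2 - L 3 0 * L 2 2 * L 1 1 - L 3 1 * L 2 0 * L 1 2 +
      L 3 1 * L 2 2 * L 1 0 + L 3 2 * L 2 0 * L 1 1 - L 3 2 * L 2 1 * L 1 0 = _
    rw [hL.1 1, hL.1 2, hL.2 1 2 (by decide)]
    ring
  rw [← neg_ne_zero (a := L 2 0 * _ - _), ← neg_ne_zero (a := L 1 0 * _ * _ - _ - _ + _),
    ← minor_three, ← minor_two, ← minor_one]
  refine ⟨fun h ↦ ⟨h _ _, h _ _, h _ _⟩, fun ⟨h1, h2, h3⟩ k hk ↦ ?_⟩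
  interval_cases k
  · exact det_fin_zero.trans_ne one_ne_zero
  · exact h1
  · exact h2
  · exact h3
  · exact det_submatrix_rev_ne_zero_of_mem_Lo1 hL

end OpenBruhatCell

section ComponentMap

open Set Topology

variable {X Y ι κ : Type*} [TopologicalSpace X] [TopologicalSpace Y]

/-- A labelling of the points of `X` whose fibres are the connected components of `X` and are all
contractible. -/
structure IsContractibleComponentMap (q : X → ι) : Prop where
  isLocallyConstant : IsLocallyConstant q
  contractibleSpace_fiber : ∀ i, ContractibleSpace (q ⁻¹' {i})

namespace IsContractibleComponentMap

theorem isConnected_fiber {q : X → ι} (hq : IsContractibleComponentMap q) (i : ι) :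
    IsConnected (q ⁻¹' {i}) :=
  have := hq.contractibleSpace_fiber i
  isConnected_iff_connectedSpace.2 inferInstance

theorem connectedComponent_eq {q : X → ι} (hq : IsContractibleComponentMap q) (x : X) :
    connectedComponent x = q ⁻¹' {q x} :=
  (subset_antisymm fun _ hy ↦ hq.isLocallyConstant.apply_eq_of_isPreconnected
    isPreconnected_connectedComponent hy mem_connectedComponent) <|
    (hq.isConnected_fiber (q x)).isPreconnected.subset_connectedComponent rfl

theorem contractibleSpace_connectedComponent {q : X → ι} (hq : IsContractibleComponentMap q)
    (x : X) : ContractibleSpace (connectedComponent x) := by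
  rw [hq.connectedComponent_eq]
  exact hq.contractibleSpace_fiber (q x)

theorem natCard_connectedComponents {q : X → ι} (hq : IsContractibleComponentMap q) :
    Nat.card (ConnectedComponents X) = Nat.card ι := by
  have eq_iff (x y : X) : connectedComponent x = connectedComponent y ↔ q x = q y := by
    rw [connectedComponent_eq_iff_mem, hq.connectedComponent_eq]
    rfl
  refine Nat.card_congr (Equiv.ofBijective (Quotient.lift q fun x y h ↦ (eq_iff x y).1 h) ⟨?_, ?_⟩)
  · rintro ⟨x⟩ ⟨y⟩ h
    exact Quotient.sound ((eq_iff x y).2 h)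
  · intro i
    obtain ⟨x, hx⟩ := (hq.isConnected_fiber i).nonempty
    exact ⟨ConnectedComponents.mk x, hx⟩

theorem comp_homeomorph {q : Y → ι} (hq : IsContractibleComponentMap q) (e : X ≃ₜ Y) :
    IsContractibleComponentMap (q ∘ e) where
  isLocallyConstant := hq.isLocallyConstant.comp_continuous e.continuous
  contractibleSpace_fiber i :=
    have := hq.contractibleSpace_fiber i
    (e.sets (preimage_comp (s := {i}))).contractibleSpace

theorem prodMap {q : X → ι} {r : Y → κ} (hq : IsContractibleComponentMap q)
    (hr : IsContractibleComponentMap r) : IsContractibleComponentMap (Prod.map q r) where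
  isLocallyConstant :=
    (hq.isLocallyConstant.comp_continuous continuous_fst).prodMk
      (hr.isLocallyConstant.comp_continuous continuous_snd)
  contractibleSpace_fiber := by
    rintro ⟨i, j⟩
    have := hq.contractibleSpace_fiber i
    have := hr.contractibleSpace_fiber j
    rw [← singleton_prod_singleton, preimage_prod_map_prod]
    exact (Homeomorph.Set.prod _ _).contractibleSpace

end IsContractibleComponentMap

theorem contractibleSpace_preimage_of_convex [AddCommGroup Y] [Module ℝ Y]
    [IsTopologicalAddGroup Y] [ContinuousSMul ℝ Y] {k : X → Y} (hk : IsEmbedding k) {W : Set Y}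
    (hW : Convex ℝ W) (hne : W.Nonempty) (hWk : W ⊆ range k) : ContractibleSpace (k ⁻¹' W) :=
  have := hW.contractibleSpace hne
  (hk.homeomorphOfSubsetRange hWk).contractibleSpace

theorem isContractibleComponentMap_decide_pos :
    IsContractibleComponentMap fun x : {x : ℝ // x ≠ 0} ↦ decide (0 < x.1) := by
  have fiber_true : (fun x : {x : ℝ // x ≠ 0} ↦ decide (0 < x.1)) ⁻¹' {true} =
      Subtype.val ⁻¹' Ioi (0 : ℝ) := by
    ext x
    simp
  have fiber_false : (fun x : {x : ℝ // x ≠ 0} ↦ decide (0 < x.1)) ⁻¹' {false} =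
      Subtype.val ⁻¹' Iio (0 : ℝ) := by
    ext ⟨x, hx⟩
    simp [hx.le_iff_lt]
  refine ⟨IsLocallyConstant.iff_isOpen_fiber.2 <| Bool.forall_bool.2 ?_, Bool.forall_bool.2 ?_⟩
  · rw [fiber_true, fiber_false]
    exact ⟨isOpen_Iio.preimage continuous_subtype_val, isOpen_Ioi.preimage continuous_subtype_val⟩
  · rw [fiber_true, fiber_false]
    exact ⟨contractibleSpace_preimage_of_convex .subtypeVal (convex_Iio 0) nonempty_Iio
        fun x hx ↦ ⟨⟨x, hx.ne⟩, rfl⟩,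
      contractibleSpace_preimage_of_convex .subtypeVal (convex_Ioi 0) nonempty_Ioi
        fun x hx ↦ ⟨⟨x, hx.ne'⟩, rfl⟩⟩

end ComponentMap

section Recurrence

open Set Topology Complex ComplexConjugate

variable {n : ℕ}

/-- Consecutive terms `(zₙ₋₁, zₙ)` of the solution of `zₖ₊₁ = xₖ zₖ - zₖ₋₁` with `z₋₁ = -i` and
`z₀ = 1`. -/
noncomputable def recurrencePair : ∀ {n : ℕ}, (Fin n → ℝ) → ℂ × ℂ
  | 0, _ => (-I, 1)
  | n + 1, x =>
    let p := recurrencePair (Fin.init x)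
    (p.2, x (Fin.last n) * p.2 - p.1)

/-- The signed continuant of `x`, that is, the determinant of the tridiagonal matrix with diagonal
`x` and off-diagonal entries `1`. It solves the same recurrence as `recurrencePair`, with the real
parts `K₋₁ = 0` and `K₀ = 1` of the initial values. -/
noncomputable def continuant (x : Fin n → ℝ) : ℝ :=
  (recurrencePair x).2.re

theorem continuant_fin_zero (x : Fin 0 → ℝ) : continuant x = 1 :=
  rfl

theorem continuant_fin_one (x : Fin 1 → ℝ) : continuant x = x 0 := by
  simp [continuant, recurrencePair]

theorem continuant_succ_succ (x : Fin (n + 2) → ℝ) :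
    continuant x =
      x (Fin.last (n + 1)) * continuant (Fin.init x) - continuant (Fin.init (Fin.init x)) := by
  simp [continuant, recurrencePair]

theorem continuant_four (x : Fin 4 → ℝ) :
    continuant x = x 3 * (x 2 * (x 0 * x 1 - 1) - x 0) - (x 0 * x 1 - 1) := by
  simp only [continuant_succ_succ, continuant_fin_one, continuant_fin_zero, Fin.init]
  change x 3 * (x 2 * (x 1 * x 0 - 1) - x 0) - (x 1 * x 0 - 1) = _
  ring

theorem recurrencePair_succ_fst (x : Fin (n + 1) → ℝ) :
    (recurrencePair x).1 = (recurrencePair (Fin.init x)).2 :=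
  rfl

theorem continuous_recurrencePair :
    ∀ n, Continuous (recurrencePair : (Fin n → ℝ) → ℂ × ℂ)
  | 0 => continuous_const
  | n + 1 => by
    have hp : Continuous fun x : Fin (n + 1) → ℝ ↦ recurrencePair (Fin.init x) :=
      (continuous_recurrencePair n).comp (Continuous.finInit continuous_id)
    exact hp.snd.prodMk
      (((continuous_ofReal.comp (continuous_apply (Fin.last n))).mul hp.snd).sub hp.fst)

/-- The cotangent `Re (conj zₙ * zₙ₊₁)` of the angle from `zₙ` to `zₙ₊₁ = t zₙ - zₙ₋₁`, for the pair
`p = (zₙ₋₁, zₙ)` of consecutive terms in `recurrencePair`. -/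
noncomputable def turningCot (p : ℂ × ℂ) (t : ℝ) : ℝ :=
  normSq p.2 * t - (conj p.2 * p.1).re

theorem im_conj_mul_recurrencePair :
    ∀ {n : ℕ} (x : Fin n → ℝ), (conj (recurrencePair x).1 * (recurrencePair x).2).im = 1
  | 0, _ => by simp [recurrencePair]
  | n + 1, x => by
    rw [← im_conj_mul_recurrencePair (Fin.init x)]
    simp only [recurrencePair, mul_im, conj_re, sub_im, ofReal_re, ofReal_im, conj_im, sub_re,
      mul_re]
    ring

theorem recurrencePair_snd_ne_zero (x : Fin n → ℝ) : (recurrencePair x).2 ≠ 0 := by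
  intro h
  simpa [h] using im_conj_mul_recurrencePair x

theorem conj_mul_recurrencePair_succ (x : Fin (n + 1) → ℝ) :
    conj (recurrencePair (Fin.init x)).2 * (recurrencePair x).2 =
      turningCot (recurrencePair (Fin.init x)) (x (Fin.last n)) + I := by
  apply Complex.ext
  · simp only [recurrencePair, turningCot, normSq_apply, mul_re, conj_re, sub_re, ofReal_re,
      ofReal_im, conj_im, sub_im, mul_im, add_re, I_re]
    ring
  · simpa [recurrencePair_succ_fst] using im_conj_mul_recurrencePair x

/-- Appending a last entry to a tuple, as a homeomorphism. -/
def snocHomeomorph (n : ℕ) (X : Type*) [TopologicalSpace X] :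
    X × (Fin n → X) ≃ₜ (Fin (n + 1) → X) where
  toEquiv := Fin.snocEquiv fun _ ↦ X
  continuous_toFun := Continuous.finSnoc (A := fun _ ↦ X) continuous_snd continuous_fst
  continuous_invFun := (continuous_apply _).prodMk (Continuous.finInit continuous_id)

/-- The fibrewise affine homeomorphism `(t, x) ↦ (a x * t - b x, x)` of a trivial line bundle. -/
def fiberwiseAffine {𝕜 X : Type*} [TopologicalSpace X] [Field 𝕜] [TopologicalSpace 𝕜]
    [IsTopologicalRing 𝕜] [ContinuousInv₀ 𝕜] (a b : C(X, 𝕜)) (ha : ∀ x, a x ≠ 0) :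
    𝕜 × X ≃ₜ 𝕜 × X where
  toFun p := (a p.2 * p.1 - b p.2, p.2)
  invFun p := ((p.1 + b p.2) / a p.2, p.2)
  left_inv p := by simp [ha]
  right_inv p := by simp [mul_div_cancel₀ _ (ha _)]
  continuous_toFun := by fun_prop
  continuous_invFun := (((continuous_fst.add (b.continuous.comp continuous_snd)).div
    (a.continuous.comp continuous_snd) fun _ ↦ ha _)).prodMk continuous_snd

/-- The triangular change of coordinates from the coefficients `xₖ` of the recurrence to the
cotangents `Re (conj zₖ * zₖ₊₁)` of its turning angles. -/
noncomputable def turningCotHomeomorph : ∀ n, (Fin n → ℝ) ≃ₜ (Fin n → ℝ)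
  | 0 => .refl _
  | n + 1 =>
    let normSqSolution : C(Fin n → ℝ, ℝ) :=
      ⟨fun x ↦ normSq (recurrencePair x).2,
        continuous_normSq.comp (continuous_recurrencePair n).snd⟩
    let shift : C(Fin n → ℝ, ℝ) :=
      ⟨fun x ↦ (conj (recurrencePair x).2 * (recurrencePair x).1).re,
        continuous_re.comp ((continuous_conj.comp (continuous_recurrencePair n).snd).mul
          (continuous_recurrencePair n).fst)⟩
    (snocHomeomorph n ℝ).symm.trans <|
      (fiberwiseAffine normSqSolution shift fun x ↦
        normSq_eq_zero.not.2 (recurrencePair_snd_ne_zero x)).trans <|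
      ((Homeomorph.refl ℝ).prodCongr (turningCotHomeomorph n)).trans (snocHomeomorph n ℝ)

theorem turningCotHomeomorph_succ (x : Fin (n + 1) → ℝ) :
    turningCotHomeomorph (n + 1) x = Fin.snoc (α := fun _ ↦ ℝ) (turningCotHomeomorph n (Fin.init x))
      (turningCot (recurrencePair (Fin.init x)) (x (Fin.last n))) :=
  rfl

/-- The inverse cotangent, with values in `(0, π)`. -/
noncomputable def arccot (y : ℝ) : ℝ :=
  Real.pi / 2 - Real.arctan y

theorem range_arccot : range arccot = Ioo 0 Real.pi := by
  have : arccot = (Real.pi / 2 - ·) ∘ Real.arctan := rfl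
  rw [this, range_comp, Real.range_arctan, image_const_sub_Ioo]
  ring_nf

theorem isEmbedding_arccot : IsEmbedding arccot :=
  (Homeomorph.subLeft (Real.pi / 2)).isEmbedding.comp <|
    Real.arctan_strictMono.isEmbedding_of_ordConnected (Real.range_arctan ▸ ordConnected_Ioo)

theorem ofReal_add_I_eq_mul_exp_arccot (y : ℝ) :
    (y + I : ℂ) = √(1 + y ^ 2) * exp (arccot y * I) := by
  have hpos : √(1 + y ^ 2) ≠ 0 := by positivity
  have hcos : Real.cos (arccot y) = y / √(1 + y ^ 2) := by
    rw [arccot, Real.cos_pi_div_two_sub, Real.sin_arctan]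
  have hsin : Real.sin (arccot y) = 1 / √(1 + y ^ 2) := by
    rw [arccot, Real.sin_pi_div_two_sub, Real.cos_arctan]
  apply Complex.ext
  · rw [re_ofReal_mul, exp_ofReal_mul_I_re, hcos, mul_div_cancel₀ _ hpos]
    simp
  · rw [im_ofReal_mul, exp_ofReal_mul_I_im, hsin, mul_div_cancel₀ _ hpos]
    simp

/-- The angles in `(0, π)` by which the solution `zₖ` in `recurrencePair` turns at each step. -/
noncomputable def turningAngles (x : Fin n → ℝ) : Fin n → ℝ :=
  Pi.map (fun _ ↦ arccot) (turningCotHomeomorph n x)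

theorem isEmbedding_turningAngles : IsEmbedding (turningAngles (n := n)) :=
  (IsEmbedding.piMap fun _ ↦ isEmbedding_arccot).comp (turningCotHomeomorph n).isEmbedding

theorem range_turningAngles : range (turningAngles (n := n)) = univ.pi fun _ ↦ Ioo 0 Real.pi := by
  change range (Pi.map (fun _ ↦ arccot) ∘ turningCotHomeomorph n) = _
  rw [(turningCotHomeomorph n).surjective.range_comp, range_piMap, range_arccot]

theorem sum_turningAngles_succ (x : Fin (n + 1) → ℝ) :
    ∑ i, turningAngles x i = ∑ i, turningAngles (Fin.init x) i +
      arccot (turningCot (recurrencePair (Fin.init x)) (x (Fin.last n))) := by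
  simp [turningAngles, turningCotHomeomorph_succ, Fin.sum_univ_castSucc]

theorem exists_recurrencePair_snd_eq_mul_exp : ∀ {n : ℕ} (x : Fin n → ℝ),
    ∃ r : ℝ, 0 < r ∧ (recurrencePair x).2 = r * exp ((∑ i, turningAngles x i : ℝ) * I)
  | 0, _ => ⟨1, one_pos, by simp [recurrencePair]⟩
  | n + 1, x => by
    obtain ⟨r, hr, hz⟩ := exists_recurrencePair_snd_eq_mul_exp (Fin.init x)
    set z := (recurrencePair (Fin.init x)).2
    set y := turningCot (recurrencePair (Fin.init x)) (x (Fin.last n))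
    set s := normSq z
    have hs : 0 < s := normSq_pos.2 (recurrencePair_snd_ne_zero _)
    have hs' : (s : ℂ) ≠ 0 := ofReal_ne_zero.2 hs.ne'
    have hstep : s * (recurrencePair x).2 = z * (y + I) := by
      rw [← conj_mul_recurrencePair_succ, normSq_eq_conj_mul_self]
      ring
    have hsum : ∑ i, turningAngles x i = ∑ i, turningAngles (Fin.init x) i + arccot y :=
      sum_turningAngles_succ x
    refine ⟨r * √(1 + y ^ 2) / s, by positivity, ?_⟩
    refine mul_left_cancel₀ hs' (hstep.trans ?_)
    rw [ofReal_add_I_eq_mul_exp_arccot, hsum, hz]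
    push_cast [add_mul, exp_add]
    field_simp

theorem exists_continuant_eq_mul_cos (x : Fin n → ℝ) :
    ∃ r : ℝ, 0 < r ∧ continuant x = r * Real.cos (∑ i, turningAngles x i) := by
  obtain ⟨r, hr, hz⟩ := exists_recurrencePair_snd_eq_mul_exp x
  exact ⟨r, hr, by rw [continuant, hz, re_ofReal_mul, exp_ofReal_mul_I_re]⟩

theorem continuant_ne_zero_iff {x : Fin n → ℝ} :
    continuant x ≠ 0 ↔ Real.cos (∑ i, turningAngles x i) ≠ 0 := by
  obtain ⟨r, hr, hx⟩ := exists_continuant_eq_mul_cos x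
  simp [hx, hr.ne']

/-- The tuples of angles in `(0, π)` whose sum lies in the `k`-th interval of length `π` on which
the cosine does not vanish. -/
def angleCell (n k : ℕ) : Set (Fin n → ℝ) :=
  (univ.pi fun _ ↦ Ioo 0 Real.pi) ∩ {δ | |∑ i, δ i - k * Real.pi| < Real.pi / 2}

theorem isOpen_angleCell (n k : ℕ) : IsOpen (angleCell n k) :=
  (isOpen_set_pi finite_univ fun _ _ ↦ isOpen_Ioo).inter <|
    isOpen_lt (by fun_prop) continuous_const

theorem convex_angleCell (n k : ℕ) : Convex ℝ (angleCell n k) := by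
  refine (convex_pi fun _ _ ↦ convex_Ioo _ _).inter ?_
  have hlin : IsLinearMap ℝ fun δ : Fin n → ℝ ↦ ∑ i, δ i :=
    ⟨fun _ _ ↦ Finset.sum_add_distrib, fun c δ ↦ by simp [Finset.mul_sum]⟩
  exact (convex_ball (k * Real.pi) (Real.pi / 2)).is_linear_preimage hlin

theorem angleCell_nonempty {n k : ℕ} (hk : k ≤ n) : (angleCell n k).Nonempty := by
  have hpi := Real.pi_pos
  have hkn : (k : ℝ) ≤ n := by exact_mod_cast hk
  refine ⟨fun _ ↦ Real.pi * (2 * k + 1) / (2 * (n + 1)), ?_, ?_⟩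
  · refine fun i _ ↦ ⟨by positivity, ?_⟩
    rw [div_lt_iff₀ (by positivity)]
    nlinarith
  · have hsum : ∑ _i : Fin n, Real.pi * (2 * k + 1) / (2 * (n + 1)) - k * Real.pi =
        Real.pi / 2 * ((n - 2 * k) / (n + 1)) := by
      rw [Finset.sum_const, Finset.card_univ, Fintype.card_fin, nsmul_eq_mul]
      field_simp
      ring
    have hlt : |((n : ℝ) - 2 * k) / (n + 1)| < 1 := by
      rw [abs_div, div_lt_one (by positivity), abs_of_pos (by positivity : (0 : ℝ) < n + 1), abs_lt]
      constructor <;> linarith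
    rw [mem_ofPred_eq, hsum, abs_mul, abs_of_pos (half_pos hpi)]
    exact mul_lt_of_lt_one_right (half_pos hpi) hlt

theorem floor_div_pi_add_half_eq_iff {θ : ℝ} (hθ : 0 ≤ θ) (hcos : Real.cos θ ≠ 0) {k : ℕ} :
    ⌊θ / Real.pi + 1 / 2⌋₊ = k ↔ |θ - k * Real.pi| < Real.pi / 2 := by
  have hpi := Real.pi_pos
  have hne : k * Real.pi - Real.pi / 2 ≠ θ := by
    rintro rfl
    exact hcos (by simp [Real.cos_sub_pi_div_two])
  rw [Nat.floor_eq_iff (by positivity), abs_lt, ← sub_le_iff_le_add, ← lt_sub_iff_add_lt,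
    le_div_iff₀ hpi, div_lt_iff₀ hpi]
  constructor
  · rintro ⟨h1, h2⟩
    have := lt_of_le_of_ne (by linarith) hne
    constructor <;> linarith
  · rintro ⟨h1, h2⟩
    constructor <;> linarith

theorem sum_turningAngles_mem_Icc (x : Fin n → ℝ) :
    ∑ i, turningAngles x i ∈ Icc 0 (n * Real.pi) := by
  have hmem (i : Fin n) : turningAngles x i ∈ Ioo 0 Real.pi :=
    (range_turningAngles ▸ mem_range_self x : turningAngles x ∈ univ.pi _) i trivial
  refine ⟨Finset.sum_nonneg fun i _ ↦ (hmem i).1.le, ?_⟩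
  simpa using Finset.sum_le_card_nsmul Finset.univ _ _ fun i _ ↦ (hmem i).2.le

theorem continuant_ne_zero_of_turningAngles_mem_angleCell {x : Fin n → ℝ} {k : ℕ}
    (hx : turningAngles x ∈ angleCell n k) : continuant x ≠ 0 := by
  have hcos := Real.cos_pos_of_mem_Ioo (abs_lt.1 hx.2)
  rw [Real.cos_sub_nat_mul_pi] at hcos
  exact continuant_ne_zero_iff.2 (right_ne_zero_of_mul hcos.ne')

/-- The total turning angle in units of `π`, rounded to the nearest integer; it labels the connected
components of the set of `x` with `continuant x ≠ 0`. -/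
noncomputable def halfTurns (x : Fin n → ℝ) : Fin (n + 1) :=
  ⟨⌊(∑ i, turningAngles x i) / Real.pi + 1 / 2⌋₊, by
    have hpi := Real.pi_pos
    obtain ⟨h0, hn⟩ := sum_turningAngles_mem_Icc x
    rw [Nat.floor_lt (by positivity)]
    have := (div_le_iff₀ hpi).2 hn
    push_cast
    linarith⟩

theorem halfTurns_eq_iff {x : Fin n → ℝ} (hx : continuant x ≠ 0) {k : Fin (n + 1)} :
    halfTurns x = k ↔ turningAngles x ∈ angleCell n k := by
  have hrange : turningAngles x ∈ univ.pi fun _ ↦ Ioo 0 Real.pi :=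
    range_turningAngles ▸ mem_range_self x
  rw [angleCell, mem_inter_iff, and_iff_right hrange, mem_ofPred_eq,
    ← floor_div_pi_add_half_eq_iff (sum_turningAngles_mem_Icc x).1 (continuant_ne_zero_iff.1 hx),
    Fin.ext_iff, halfTurns]

theorem isContractibleComponentMap_halfTurns (n : ℕ) :
    IsContractibleComponentMap fun x : {x : Fin n → ℝ // continuant x ≠ 0} ↦ halfTurns x.1 := by
  have hemb : IsEmbedding fun x : {x : Fin n → ℝ // continuant x ≠ 0} ↦ turningAngles x.1 :=
    isEmbedding_turningAngles.comp .subtypeVal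
  have fiber (k : Fin (n + 1)) :
      (fun x : {x : Fin n → ℝ // continuant x ≠ 0} ↦ halfTurns x.1) ⁻¹' {k} =
        (fun x ↦ turningAngles x.1) ⁻¹' angleCell n k :=
    ext fun x ↦ halfTurns_eq_iff x.2
  refine ⟨IsLocallyConstant.iff_isOpen_fiber.2 fun k ↦ ?_, fun k ↦ ?_⟩ <;> rw [fiber]
  · exact (isOpen_angleCell n k).preimage hemb.continuous
  · refine contractibleSpace_preimage_of_convex hemb (convex_angleCell n k)
      (angleCell_nonempty k.is_le) fun δ hδ ↦ ?_
    obtain ⟨x, rfl⟩ : δ ∈ range turningAngles := range_turningAngles ▸ hδ.1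
    have hx : continuant x ≠ 0 := continuant_ne_zero_of_turningAngles_mem_angleCell hδ
    exact ⟨⟨x, hx⟩, rfl⟩

end Recurrence

section Coordinates

/-- The matrix in `Lo1 4` with coordinates `f`, `g` and `x`. Up to sign its lower left minors of
sizes `1`, `2` and `3` are `f`, `f * g` and `f * continuant x`. -/
noncomputable def coordMatrix (f g : ℝ) (x : Fin 4 → ℝ) : Matrix (Fin 4) (Fin 4) ℝ :=
  !![1, 0, 0, 0;
    x 3, 1, 0, 0;
    g * x 1, g * (x 1 * x 2 - 1), 1, 0;
    f, f * x 2, f / g * x 0, 1]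

theorem coordMatrix_mem_Lo1 (f g : ℝ) (x : Fin 4 → ℝ) : coordMatrix f g x ∈ Lo1 4 :=
  mem_Lo1_four_iff.2 rfl

theorem coordMatrix_mem_BL_iff {f g : ℝ} (hf : f ≠ 0) (hg : g ≠ 0) {x : Fin 4 → ℝ} :
    coordMatrix f g x ∈ BL 4 η4 ↔ continuant x ≠ 0 := by
  have minor_two : g * x 1 * (f * x 2) - g * (x 1 * x 2 - 1) * f = f * g := by ring
  have minor_three : x 3 * (g * (x 1 * x 2 - 1)) * (f / g * x 0) - x 3 * (f * x 2) -
      g * x 1 * (f / g * x 0) + f = f * continuant x := by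
    rw [continuant_four]
    field_simp
    ring
  rw [mem_BL_η4_iff, and_iff_right (coordMatrix_mem_Lo1 f g x)]
  change f ≠ 0 ∧ g * x 1 * (f * x 2) - g * (x 1 * x 2 - 1) * f ≠ 0 ∧
    x 3 * (g * (x 1 * x 2 - 1)) * (f / g * x 0) - x 3 * (f * x 2) -
      g * x 1 * (f / g * x 0) + f ≠ 0 ↔ _
  rw [minor_two, minor_three]
  simp [hf, hg]

theorem continuous_coordMatrix {X : Type*} [TopologicalSpace X] {f g : X → ℝ} {x : X → Fin 4 → ℝ}
    (hf : Continuous f) (hg : Continuous g) (hx : Continuous x) (hg₀ : ∀ p, g p ≠ 0) :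
    Continuous fun p ↦ coordMatrix (f p) (g p) (x p) := by
  refine continuous_matrix fun i j ↦ ?_
  fin_cases i <;> fin_cases j <;> simp only [coordMatrix] <;>
    fun_prop (disch := assumption)

/-- The coordinate `g` of `coordMatrix f g x`, the quotient of its first two lower left minors (up
to sign). It is `0` by convention if `L 3 0 = 0`. -/
noncomputable def minorRatio (L : Matrix (Fin 4) (Fin 4) ℝ) : ℝ :=
  (L 2 0 * L 3 1 - L 2 1 * L 3 0) / L 3 0

/-- The coordinate `x` of `coordMatrix f g x`. -/
noncomputable def continuantCoords (L : Matrix (Fin 4) (Fin 4) ℝ) : Fin 4 → ℝ :=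
  ![L 3 2 * minorRatio L / L 3 0, L 2 0 / minorRatio L, L 3 1 / L 3 0, L 1 0]

theorem minorRatio_coordMatrix {f : ℝ} (hf : f ≠ 0) (g : ℝ) (x : Fin 4 → ℝ) :
    minorRatio (coordMatrix f g x) = g := by
  change (g * x 1 * (f * x 2) - g * (x 1 * x 2 - 1) * f) / f = g
  field_simp
  ring

theorem continuantCoords_coordMatrix {f g : ℝ} (hf : f ≠ 0) (hg : g ≠ 0) (x : Fin 4 → ℝ) :
    continuantCoords (coordMatrix f g x) = x := by
  rw [continuantCoords, minorRatio_coordMatrix hf]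
  have coord_zero : f / g * x 0 * g / f = x 0 := by field_simp
  ext i
  fin_cases i <;> simp [coordMatrix, coord_zero, hf, hg]

theorem minorRatio_ne_zero {L : Matrix (Fin 4) (Fin 4) ℝ} (hL : L ∈ BL 4 η4) :
    minorRatio L ≠ 0 :=
  have ⟨_, hminor_one, hminor_two, _⟩ := mem_BL_η4_iff.1 hL
  div_ne_zero hminor_two hminor_one

theorem coordMatrix_continuantCoords {L : Matrix (Fin 4) (Fin 4) ℝ} (hL : L ∈ BL 4 η4) :
    coordMatrix (L 3 0) (minorRatio L) (continuantCoords L) = L := by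
  have hf : L 3 0 ≠ 0 := (mem_BL_η4_iff.1 hL).2.1
  have hg : minorRatio L ≠ 0 := minorRatio_ne_zero hL
  have entry_two_one : minorRatio L * (L 2 0 / minorRatio L * (L 3 1 / L 3 0) - 1) = L 2 1 := by
    rw [mul_sub, ← mul_assoc, mul_div_cancel₀ _ hg, minorRatio]
    field_simp
    ring
  refine Eq.trans ?_ (mem_Lo1_four_iff.1 hL.1).symm
  simp [coordMatrix, continuantCoords, entry_two_one, mul_div_cancel₀, hf, hg]

theorem continuous_minorRatio : Continuous fun L : BL 4 η4 ↦ minorRatio L.1 := by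
  have entry (i j : Fin 4) : Continuous fun L : BL 4 η4 ↦ L.1 i j :=
    continuous_subtype_val.matrix_elem i j
  exact (((entry 2 0).mul (entry 3 1)).sub ((entry 2 1).mul (entry 3 0))).div (entry 3 0)
    fun L ↦ (mem_BL_η4_iff.1 L.2).2.1

theorem continuous_continuantCoords : Continuous fun L : BL 4 η4 ↦ continuantCoords L.1 := by
  have entry (i j : Fin 4) : Continuous fun L : BL 4 η4 ↦ L.1 i j :=
    continuous_subtype_val.matrix_elem i j
  have hf (L : BL 4 η4) : L.1 3 0 ≠ 0 := (mem_BL_η4_iff.1 L.2).2.1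
  refine continuous_pi ?_
  simp only [Fin.forall_fin_succ]
  refine ⟨?_, ?_, ?_, ?_, by simp⟩
  · exact ((entry 3 2).mul continuous_minorRatio).div (entry 3 0) hf
  · exact (entry 2 0).div continuous_minorRatio fun L ↦ minorRatio_ne_zero L.2
  · exact (entry 3 1).div (entry 3 0) hf
  · exact entry 1 0

/-- The coordinates `(f, g, x)` of `coordMatrix f g x` as a homeomorphism from `BL 4 η4`. -/
noncomputable def coordHomeomorph :
    BL 4 η4 ≃ₜ {t : ℝ // t ≠ 0} × {t : ℝ // t ≠ 0} × {x : Fin 4 → ℝ // continuant x ≠ 0} where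
  toFun L :=
    have hf := (mem_BL_η4_iff.1 L.2).2.1
    have hg := minorRatio_ne_zero L.2
    (⟨L.1 3 0, hf⟩, ⟨minorRatio L.1, hg⟩, ⟨continuantCoords L.1, (coordMatrix_mem_BL_iff hf hg).1
      ((coordMatrix_continuantCoords L.2).symm ▸ L.2)⟩)
  invFun p := ⟨coordMatrix p.1 p.2.1 p.2.2, (coordMatrix_mem_BL_iff p.1.2 p.2.1.2).2 p.2.2.2⟩
  left_inv L := Subtype.ext (coordMatrix_continuantCoords L.2)
  right_inv p := Prod.ext rfl <| Prod.ext (Subtype.ext (minorRatio_coordMatrix p.1.2 _ _)) <|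
    Subtype.ext (continuantCoords_coordMatrix p.1.2 p.2.1.2 _)
  continuous_toFun := by
    have entry : Continuous fun L : BL 4 η4 ↦ L.1 3 0 := continuous_subtype_val.matrix_elem 3 0
    exact (entry.subtype_mk _).prodMk <|
      (continuous_minorRatio.subtype_mk _).prodMk (continuous_continuantCoords.subtype_mk _)
  continuous_invFun :=
    (continuous_coordMatrix (by fun_prop) (by fun_prop) (by fun_prop) fun p ↦ p.2.1.2).subtype_mk _

end Coordinates

/-- `BL_η ⊂ Lo¹₄` for the longest element `η ∈ S₄` has exactly 20
connected components, all of which are contractible. -/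
theorem stmt3 :
    Nat.card (ConnectedComponents ↥(BL 4 η4)) = 20 ∧
      ∀ L : ↥(BL 4 η4), ContractibleSpace ↥(connectedComponent L) := by
  have h := (isContractibleComponentMap_decide_pos.prodMap
    (isContractibleComponentMap_decide_pos.prodMap
      (isContractibleComponentMap_halfTurns 4))).comp_homeomorph coordHomeomorph
  refine ⟨?_, h.contractibleSpace_connectedComponent⟩
  rw [h.natCard_connectedComponents]
  simp
end

section
/- Let σ ∈ S₅ be the permutation with σ(1)=4, σ(2)=5, σ(3)=1, σ(4)=3, σ(5)=2 (complete notation [45132]). The set BL_σ ⊂ Lo¹₅ has exactly 40 connected components, and every connected component of BL_σ is contractible. -/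
open Matrix

/-- The permutation `[45132] ∈ S₅` (in `1`-indexed complete notation), i.e.
`σ(1)=4, σ(2)=5, σ(3)=1, σ(4)=3, σ(5)=2`, written `0`-indexed on `Fin 5`. -/
def σ45132 : Equiv.Perm (Fin 5) :=
  ⟨![3, 4, 0, 2, 1], ![2, 4, 3, 0, 1], by decide, by decide⟩

/-
A matrix in the cell is determined by a base point `(x, y, d) ∈ ℝ³` and four fibre coordinates
`(b, c, e, h)`, and the only conditions are that `b`, `x c - y`, `y e - d x` and `d h - y`, which
are minors up to sign, do not vanish. Each of them is affine in its own fibre coordinate, so fixing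
their signs `β`, `η`, `δ`, `κ` leaves an open set with convex fibres. It retracts onto a section
over its projection to `ℝ³`, so only the components of the projection matter.

A fibre is empty only if some minor does not depend on its fibre coordinate and has the wrong sign,
so the projection is given by
`(x ≠ 0 ∨ η y < 0) ∧ (y ≠ 0 ∨ δ d x < 0) ∧ (d ≠ 0 ∨ κ y < 0)`.
For `κ = η` it consists of a set star-shaped about `(0, -η, 0)` and two octants in the half-space
`η y > 0`; for `κ = -η` it consists of two sets star-shaped about `(ε, 0, -ε δ)`, `ε = ±1`. Hence
there are `2 · 2 · 2 · (1 + 2 + 2) = 40` components.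
-/

open Set Topology TopologicalSpace

section DisjointOpenCover

variable {X ι : Type*} [TopologicalSpace X] {U : ι → Set X}

theorem isClopen_of_existsUnique_mem (hopen : ∀ i, IsOpen (U i)) (hU : ∀ x, ∃! i, x ∈ U i)
    (i : ι) : IsClopen (U i) := by
  have hcompl : (U i)ᶜ = ⋃ j ≠ i, U j := by
    ext x
    obtain ⟨k, hk, -⟩ := hU x
    simp only [mem_compl_iff, mem_iUnion, exists_prop]
    exact ⟨fun hx => ⟨k, fun hki => hx (hki ▸ hk), hk⟩,
      fun ⟨j, hji, hj⟩ hi => hji ((hU x).unique hj hi)⟩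
  refine ⟨isOpen_compl_iff.mp ?_, hopen i⟩
  rw [hcompl]
  exact isOpen_biUnion fun j _ => hopen j

theorem connectedComponent_eq_of_existsUnique_mem (hopen : ∀ i, IsOpen (U i))
    (hU : ∀ x, ∃! i, x ∈ U i) (hconn : ∀ i, IsPreconnected (U i)) {i : ι} {x : X} (hx : x ∈ U i) :
    connectedComponent x = U i :=
  ((isClopen_of_existsUnique_mem hopen hU i).connectedComponent_subset hx).antisymm
    ((hconn i).subset_connectedComponent hx)

theorem card_connectedComponents_eq_of_existsUnique_mem (hopen : ∀ i, IsOpen (U i))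
    (hU : ∀ x, ∃! i, x ∈ U i) (hconn : ∀ i, IsConnected (U i)) :
    Nat.card (ConnectedComponents X) = Nat.card ι := by
  have hcomp {i : ι} {x : X} (hx : x ∈ U i) : connectedComponent x = U i :=
    connectedComponent_eq_of_existsUnique_mem hopen hU (fun j => (hconn j).isPreconnected) hx
  choose g hg using fun i => (hconn i).nonempty
  refine (Nat.card_congr (Equiv.ofBijective (fun i => ConnectedComponents.mk (g i)) ⟨?_, ?_⟩)).symm
  · intro i j hij
    have hUij : U i = U j := by
      rw [← hcomp (hg i), ← hcomp (hg j), ConnectedComponents.coe_eq_coe.mp hij]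
    exact (hU (g i)).unique (hg i) (hUij ▸ hg i)
  · intro c
    obtain ⟨x, rfl⟩ := ConnectedComponents.surjective_coe c
    obtain ⟨i, hi, -⟩ := hU x
    exact ⟨i, ConnectedComponents.coe_eq_coe.mpr ((hcomp (hg i)).trans (hcomp hi).symm)⟩

end DisjointOpenCover

theorem contractibleSpace_of_convex_fibers {X F : Type*} [TopologicalSpace X]
    [PseudoMetrizableSpace X] [AddCommGroup F] [Module ℝ F] [TopologicalSpace F]
    [ContinuousAdd F] [ContinuousSMul ℝ F] {S : Set (X × F)} (hS : IsOpen S)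
    (hconv : ∀ x, Convex ℝ {v | (x, v) ∈ S}) [ContractibleSpace (Prod.fst '' S)] :
    ContractibleSpace S := by
  let := pseudoMetrizableSpacePseudoMetric X
  obtain ⟨g, hg⟩ : ∃ g : C(Prod.fst '' S, F), ∀ x : Prod.fst '' S, (x.1, g x) ∈ S := by
    refine exists_continuous_forall_mem_convex_of_local_const
      (t := fun x : Prod.fst '' S => {v | (x.1, v) ∈ S}) (fun x => hconv x) ?_
    rintro ⟨_, ⟨x, v⟩, hv, rfl⟩
    have hslice : Continuous fun y : Prod.fst '' S => (y.1, v) := by fun_prop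
    exact ⟨v, (hS.preimage hslice).mem_nhds hv⟩
  let proj : C(S, Prod.fst '' S) := ⟨fun p => ⟨p.1.1, mem_image_of_mem _ p.2⟩, by fun_prop⟩
  let sec : C(Prod.fst '' S, S) := ⟨fun x => ⟨(x.1, g x), hg x⟩, by fun_prop⟩
  let slide : (sec.comp proj).Homotopy (ContinuousMap.id S) :=
    { toFun := fun q => ⟨(q.2.1.1, (1 - q.1.1) • g (proj q.2) + q.1.1 • q.2.1.2),
        hconv _ (hg (proj q.2)) q.2.2 (sub_nonneg.mpr q.1.2.2) q.1.2.1 (sub_add_cancel 1 q.1.1)⟩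
      continuous_toFun := by fun_prop
      map_zero_left := fun p => by simp [sec, proj]
      map_one_left := fun p => by simp }
  exact ContinuousMap.HomotopyEquiv.contractibleSpace
    ⟨proj, sec, ⟨slide⟩, .refl _⟩

section UnitsSMul

variable {G : Type*} [AddCommGroup G] [LinearOrder G] [IsOrderedAddMonoid G] {ε ε' : ℤˣ} {t : G}

theorem exists_pos_units_smul (ht : t ≠ 0) : ∃ ε : ℤˣ, 0 < ε • t := by
  rcases ht.lt_or_gt with ht | ht
  · exact ⟨-1, by simpa using ht⟩
  · exact ⟨1, by simpa using ht⟩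

theorem units_eq_of_pos_smul (h : 0 < ε • t) (h' : 0 < ε' • t) : ε = ε' := by
  rcases Int.units_eq_one_or ε with rfl | rfl <;> rcases Int.units_eq_one_or ε' with rfl | rfl <;>
    simp only [one_smul, Units.neg_smul, Left.neg_pos_iff] at h h' ⊢
  exacts [absurd h h'.not_gt, absurd h h'.not_gt]

end UnitsSMul

theorem units_smul_smul_self {M : Type*} [AddCommGroup M] (ε : ℤˣ) (t : M) : ε • ε • t = t := by
  rw [smul_smul, Int.units_mul_self, one_smul]

theorem units_smul_mul_units_smul {R : Type*} [Ring R] (ε δ : ℤˣ) (d x : R) :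
    δ • (d * x) = (ε * δ) • d * ε • x := by
  rw [smul_mul_smul_comm, mul_right_comm, Int.units_mul_self, one_mul]

theorem units_smul_mul_add_mul {R : Type*} [Ring R] (ε : ℤˣ) (a t b u : R) :
    ε • (a * t + b * u) = a * ε • t + b * ε • u := by
  rw [smul_add, mul_smul_comm, mul_smul_comm]

/-- The solution set of the affine inequality `a * t > r` for `ε = 1`, and of `a * t < r` for
`ε = -1`: the values of one fibre coordinate for which a minor has sign `ε`. -/
def signSolutions (ε : ℤˣ) (a r : ℝ) : Set ℝ :=
  {t | 0 < ε • (a * t - r)}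

theorem units_eq_of_mem_signSolutions {ε ε' : ℤˣ} {a r t : ℝ} (h : t ∈ signSolutions ε a r)
    (h' : t ∈ signSolutions ε' a r) : ε = ε' :=
  units_eq_of_pos_smul (G := ℝ) (t := a * t - r) h h'

theorem convex_signSolutions (ε : ℤˣ) (a r : ℝ) : Convex ℝ (signSolutions ε a r) := by
  intro t ht t' ht' s s' hs hs' hss
  have hcomb : ε • (a * (s • t + s' • t') - r) =
      s • ε • (a * t - r) + s' • ε • (a * t' - r) := by
    simp only [Units.smul_def, zsmul_eq_mul, smul_eq_mul]
    linear_combination (ε : ℝ) * r * hss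
  exact (hcomb ▸ convex_Ioi (0 : ℝ) ht ht' hs hs' hss :)

theorem signSolutions_nonempty_iff {ε : ℤˣ} {a r : ℝ} :
    (signSolutions ε a r).Nonempty ↔ a ≠ 0 ∨ ε • r < 0 := by
  constructor
  · rintro ⟨t, ht⟩
    refine or_iff_not_imp_left.mpr fun ha => ?_
    simpa [signSolutions, not_not.mp ha] using ht
  · rintro (ha | hr)
    · refine ⟨(r + ε • 1) / a, ?_⟩
      simp [signSolutions, mul_div_cancel₀ _ ha, units_smul_smul_self]
    · exact ⟨0, by simpa [signSolutions] using hr⟩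

/-- The types of components of the set of base points `(x, y, d)` over which the four minors can
have prescribed signs. The sign `ε` distinguishes two components of the same type. -/
inductive BaseShape
  | central
  | octant (ε : ℤˣ)
  | lateral (ε : ℤˣ)
  deriving Fintype

namespace BaseShape

/-- The sign of the minor `d * h - y` over the regions of a given shape, where `η` is the sign of
`x * c - y`. -/
def lastSign (η : ℤˣ) : BaseShape → ℤˣ
  | central => η
  | octant _ => η
  | lateral _ => -η

/-- The region of a given shape, where `η` and `δ` are the signs of `x * c - y` and
`y * e - d * x`. -/
def region (η δ : ℤˣ) : BaseShape → Set (ℝ × ℝ × ℝ)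
  | central => {q | η • q.2.1 < 0 ∨ δ • (q.2.2 * q.1) < 0}
  | octant ε => {q | 0 < η • q.2.1 ∧ 0 < ε • q.1 ∧ 0 < (ε * δ) • q.2.2}
  | lateral ε =>
    {q | (η • q.2.1 < 0 ∨ 0 < ε • q.1) ∧ (0 < η • q.2.1 ∨ (ε * δ) • q.2.2 < 0)}

variable {η δ : ℤˣ} {x y d : ℝ}

theorem isOpen_region (η δ : ℤˣ) (s : BaseShape) : IsOpen (s.region η δ) := by
  have hlt {f g : ℝ × ℝ × ℝ → ℝ} (hf : Continuous f) (hg : Continuous g) :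
      IsOpen {q | f q < g q} := isOpen_lt hf hg
  cases s with
  | central => exact (hlt (by fun_prop) (by fun_prop)).union (hlt (by fun_prop) (by fun_prop))
  | octant ε =>
    exact (hlt (by fun_prop) (by fun_prop)).inter
      ((hlt (by fun_prop) (by fun_prop)).inter (hlt (by fun_prop) (by fun_prop)))
  | lateral ε =>
    exact ((hlt (by fun_prop) (by fun_prop)).union (hlt (by fun_prop) (by fun_prop))).inter
      ((hlt (by fun_prop) (by fun_prop)).union (hlt (by fun_prop) (by fun_prop)))

theorem starConvex_central (η δ : ℤˣ) :
    StarConvex ℝ (0, -(η • 1), 0) (central.region η δ) := by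
  refine (starConvex_iff_forall_pos (by simp [region, units_smul_smul_self])).mpr ?_
  rintro ⟨x, y, d⟩ hq a b ha hb -
  refine hq.imp (fun hy => ?_) fun hdx => ?_
  · simpa [smul_add, mul_smul_comm, units_smul_smul_self] using
      (mul_neg_of_pos_of_neg hb hy).trans ha
  · have hscale : δ • (b * d * (b * x)) = b * b * δ • (d * x) := by
      rw [mul_mul_mul_comm, mul_smul_comm]
    simpa [hscale] using mul_neg_of_pos_of_neg (mul_pos hb hb) hdx

theorem starConvex_lateral (η δ ε : ℤˣ) :
    StarConvex ℝ (ε • 1, 0, -((ε * δ) • 1)) ((lateral ε).region η δ) := by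
  refine (starConvex_iff_forall_pos (by simp [region, units_smul_smul_self])).mpr ?_
  rintro ⟨x, y, d⟩ ⟨hyx, hyd⟩ a b ha hb -
  refine ⟨hyx.imp (fun hy => ?_) fun hx => ?_, hyd.imp (fun hy => ?_) fun hd => ?_⟩
  · simpa [mul_smul_comm] using mul_neg_of_pos_of_neg hb hy
  · simpa [smul_add, mul_smul_comm, units_smul_smul_self] using add_pos ha (mul_pos hb hx)
  · simpa [mul_smul_comm] using mul_pos hb hy
  · simpa [smul_add, mul_smul_comm, units_smul_smul_self] using
      (mul_neg_of_pos_of_neg hb hd).trans ha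

theorem convex_octant (η δ ε : ℤˣ) : Convex ℝ ((octant ε).region η δ) := by
  rintro ⟨x, y, d⟩ ⟨hy, hx, hd⟩ ⟨x', y', d'⟩ ⟨hy', hx', hd'⟩ a b ha hb hab
  have hpos {τ : ℤˣ} {t t' : ℝ} (ht : 0 < τ • t) (ht' : 0 < τ • t') :
      0 < τ • (a * t + b * t') := by
    rw [units_smul_mul_add_mul]
    exact convex_Ioi (0 : ℝ) ht ht' ha hb hab
  exact ⟨hpos hy hy', hpos hx hx', hpos hd hd'⟩

theorem disjoint_region_central_octant (η δ ε : ℤˣ) :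
    Disjoint (central.region η δ) ((octant ε).region η δ) := by
  refine disjoint_left.mpr ?_
  rintro ⟨x, y, d⟩ (hy | hdx) ⟨hy', hx, hd⟩
  · exact hy.not_gt hy'
  · refine (mul_pos hd hx).not_gt ?_
    rwa [← units_smul_mul_units_smul]

theorem octant_injOn_region {ε ε' : ℤˣ} {q : ℝ × ℝ × ℝ} (h : q ∈ (octant ε).region η δ)
    (h' : q ∈ (octant ε').region η δ) : ε = ε' :=
  units_eq_of_pos_smul h.2.1 h'.2.1

theorem lateral_injOn_region {ε ε' : ℤˣ} {q : ℝ × ℝ × ℝ} (h : q ∈ (lateral ε).region η δ)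
    (h' : q ∈ (lateral ε').region η δ) : ε = ε' := by
  obtain ⟨x, y, d⟩ := q
  by_cases hy : 0 < η • y
  · exact units_eq_of_pos_smul (h.1.resolve_left hy.not_gt) (h'.1.resolve_left hy.not_gt)
  · have hd : 0 < (ε * δ) • -d := by simpa using h.2.resolve_left hy
    have hd' : 0 < (ε' * δ) • -d := by simpa using h'.2.resolve_left hy
    exact mul_right_cancel (units_eq_of_pos_smul hd hd')

theorem eq_of_mem_region {s s' : BaseShape} {q : ℝ × ℝ × ℝ}
    (hlast : s.lastSign η = s'.lastSign η) (h : q ∈ s.region η δ) (h' : q ∈ s'.region η δ) :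
    s = s' := by
  have hη : η ≠ -η := units_ne_neg_self η
  cases s <;> cases s'
  case central.central => rfl
  case octant.octant => rw [octant_injOn_region h h']
  case lateral.lateral => rw [lateral_injOn_region h h']
  case central.octant ε =>
    exact absurd h' ((disjoint_region_central_octant η δ ε).notMem_of_mem_left h)
  case octant.central ε =>
    exact absurd h ((disjoint_region_central_octant η δ ε).notMem_of_mem_left h')
  all_goals exact absurd hlast (by first | exact hη | exact hη.symm)

theorem exists_mem_region_lastSign_eq_self (hx : x ≠ 0 ∨ η • y < 0)
    (hy : y ≠ 0 ∨ δ • (d * x) < 0) (hd : d ≠ 0 ∨ η • y < 0) :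
    ∃ s : BaseShape, s.lastSign η = η ∧ (x, y, d) ∈ s.region η δ := by
  by_cases hcentral : (x, y, d) ∈ central.region η δ
  · exact ⟨central, rfl, hcentral⟩
  obtain ⟨hηy, hδ⟩ : ¬ η • y < 0 ∧ ¬ δ • (d * x) < 0 := not_or.mp hcentral
  obtain ⟨ε, hε⟩ := exists_pos_units_smul (hx.resolve_right hηy)
  refine ⟨octant ε, rfl, lt_of_le_of_ne (not_lt.mp hηy) ?_, hε, ?_⟩
  · exact ((smul_ne_zero_iff_ne η).mpr (hy.resolve_right hδ)).symm
  · rw [units_smul_mul_units_smul ε, not_lt] at hδ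
    exact lt_of_le_of_ne (nonneg_of_mul_nonneg_left hδ hε)
      ((smul_ne_zero_iff_ne _).mpr (hd.resolve_right hηy)).symm

theorem exists_mem_region_lastSign_eq_neg (hx : x ≠ 0 ∨ η • y < 0)
    (hy : y ≠ 0 ∨ δ • (d * x) < 0) (hd : d ≠ 0 ∨ 0 < η • y) :
    ∃ s : BaseShape, s.lastSign η = -η ∧ (x, y, d) ∈ s.region η δ := by
  suffices ∃ ε, (x, y, d) ∈ (lateral ε).region η δ from this.imp' lateral fun _ h => ⟨rfl, h⟩
  rcases lt_trichotomy (η • y) 0 with hηy | hηy | hηy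
  · obtain ⟨τ, hτ⟩ := exists_pos_units_smul (hd.resolve_right hηy.not_gt)
    refine ⟨-τ * δ, .inl hηy, .inr ?_⟩
    simpa [mul_assoc, Int.units_mul_self] using hτ
  · obtain ⟨ε, hε⟩ := exists_pos_units_smul (hx.resolve_right hηy.not_lt)
    have hδ : δ • (d * x) < 0 := hy.resolve_left (not_not.mpr ((smul_eq_zero_iff_eq η).mp hηy))
    rw [units_smul_mul_units_smul ε] at hδ
    exact ⟨ε, .inr hε, .inr (neg_of_mul_neg_left hδ hε.le)⟩
  · obtain ⟨ε, hε⟩ := exists_pos_units_smul (hx.resolve_right hηy.not_gt)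
    exact ⟨ε, .inr hε, .inl hηy⟩

theorem existsUnique_mem_region (κ : ℤˣ) (hx : x ≠ 0 ∨ η • y < 0)
    (hy : y ≠ 0 ∨ δ • (d * x) < 0) (hd : d ≠ 0 ∨ κ • y < 0) :
    ∃! s : BaseShape, s.lastSign η = κ ∧ (x, y, d) ∈ s.region η δ := by
  refine existsUnique_of_exists_of_unique ?_ fun s s' hs hs' =>
    eq_of_mem_region (hs.1.trans hs'.1.symm) hs.2 hs'.2
  by_cases hκ : κ = η
  · subst hκ
    exact exists_mem_region_lastSign_eq_self hx hy hd
  · obtain rfl := Int.units_ne_iff_eq_neg.mp hκ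
    exact exists_mem_region_lastSign_eq_neg hx hy (by simpa using hd)

instance contractibleSpace_region (η δ : ℤˣ) (s : BaseShape) :
    ContractibleSpace (s.region η δ) := by
  cases s with
  | central =>
    refine (starConvex_central η δ).contractibleSpace ⟨(0, -(η • 1), 0), ?_⟩
    simp [region, units_smul_smul_self]
  | octant ε =>
    refine (convex_octant η δ ε).contractibleSpace ⟨(ε • 1, η • 1, (ε * δ) • 1), ?_⟩
    simp [region, units_smul_smul_self]
  | lateral ε =>
    refine (starConvex_lateral η δ ε).contractibleSpace ⟨(ε • 1, 0, -((ε * δ) • 1)), ?_⟩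
    simp [region, units_smul_smul_self]

end BaseShape

/-- The space of chart coordinates `((x, y, d), (b, c, e, h))`: a base point and a fibre point. -/
abbrev ChartSpace : Type :=
  (ℝ × ℝ × ℝ) × (ℝ × ℝ × ℝ × ℝ)

/-- The labels of the forty cells: three signs of minors and a shape. -/
abbrev CellIndex : Type :=
  ℤˣ × ℤˣ × ℤˣ × BaseShape

/-- The fibre coordinates for which the four minors of the chart have the signs `β`, `η`, `δ`, `κ`
over the base point `q`. -/
def signFiber (β η δ κ : ℤˣ) (q : ℝ × ℝ × ℝ) : Set (ℝ × ℝ × ℝ × ℝ) :=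
  signSolutions β 1 0 ×ˢ signSolutions η q.1 q.2.1 ×ˢ
    signSolutions δ q.2.1 (q.2.2 * q.1) ×ˢ signSolutions κ q.2.2 q.2.1

theorem convex_signFiber (β η δ κ : ℤˣ) (q : ℝ × ℝ × ℝ) : Convex ℝ (signFiber β η δ κ q) :=
  (convex_signSolutions _ _ _).prod <| (convex_signSolutions _ _ _).prod <|
    (convex_signSolutions _ _ _).prod (convex_signSolutions _ _ _)

theorem signFiber_nonempty_iff {β η δ κ : ℤˣ} {x y d : ℝ} :
    (signFiber β η δ κ (x, y, d)).Nonempty ↔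
      (x ≠ 0 ∨ η • y < 0) ∧ (y ≠ 0 ∨ δ • (d * x) < 0) ∧ (d ≠ 0 ∨ κ • y < 0) := by
  simp [signFiber, prod_nonempty_iff, signSolutions_nonempty_iff]

theorem isOpen_setOf_mem_signFiber (β η δ κ : ℤˣ) :
    IsOpen {p : ChartSpace | p.2 ∈ signFiber β η δ κ p.1} := by
  have hpos {f : ChartSpace → ℝ} (hf : Continuous f) :
      IsOpen {p | 0 < f p} := isOpen_lt continuous_const hf
  exact (hpos (by fun_prop)).inter <| (hpos (by fun_prop)).inter <|
    (hpos (by fun_prop)).inter (hpos (by fun_prop))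

theorem BaseShape.signFiber_nonempty {η δ : ℤˣ} {s : BaseShape} {q : ℝ × ℝ × ℝ} (β : ℤˣ)
    (hq : q ∈ s.region η δ) : (signFiber β η δ (s.lastSign η) q).Nonempty := by
  obtain ⟨x, y, d⟩ := q
  rw [signFiber_nonempty_iff]
  have hne {τ : ℤˣ} {t : ℝ} (h : τ • t ≠ 0) : t ≠ 0 := (smul_ne_zero_iff_ne τ).mp h
  cases s with
  | central =>
    rcases hq with hy | hdx
    · exact ⟨.inr hy, .inl (hne hy.ne), .inr hy⟩
    · have hdx' : d * x ≠ 0 := hne hdx.ne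
      exact ⟨.inl (right_ne_zero_of_mul hdx'), .inr hdx, .inl (left_ne_zero_of_mul hdx')⟩
  | octant ε =>
    obtain ⟨hy, hx, hd⟩ := hq
    exact ⟨.inl (hne hx.ne'), .inl (hne hy.ne'), .inl (hne hd.ne')⟩
  | lateral ε =>
    obtain ⟨hyx, hyd⟩ := hq
    refine ⟨hyx.symm.imp_left fun hx => hne hx.ne', ?_, ?_⟩
    · rw [units_smul_mul_units_smul ε]
      rcases hyx with hy | hx
      · exact .inl (hne hy.ne)
      · exact hyd.imp (fun hy => hne hy.ne') fun hd => mul_neg_of_neg_of_pos hd hx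
    · exact hyd.symm.imp (fun hd => hne hd.ne) fun hy => by simpa [lastSign] using hy

/-- The points of the chart whose minors have the first three signs `β`, `η`, `δ` and whose base
point lies in the region of shape `s`, which determines the fourth sign. -/
def cell : CellIndex → Set ChartSpace
  | (β, η, δ, s) => {p | p.1 ∈ s.region η δ ∧ p.2 ∈ signFiber β η δ (s.lastSign η) p.1}

theorem isOpen_cell (i : CellIndex) : IsOpen (cell i) :=
  ((i.2.2.2.isOpen_region i.2.1 i.2.2.1).preimage continuous_fst).inter
    (isOpen_setOf_mem_signFiber _ _ _ _)

theorem fst_image_cell (β η δ : ℤˣ) (s : BaseShape) :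
    Prod.fst '' cell (β, η, δ, s) = s.region η δ := by
  ext q
  constructor
  · rintro ⟨p, hp, rfl⟩
    exact hp.1
  · intro hq
    obtain ⟨v, hv⟩ := BaseShape.signFiber_nonempty β hq
    exact ⟨(q, v), ⟨hq, hv⟩, rfl⟩

instance contractibleSpace_cell (i : CellIndex) : ContractibleSpace (cell i) := by
  obtain ⟨β, η, δ, s⟩ := i
  have : ContractibleSpace (Prod.fst '' cell (β, η, δ, s)) := by
    rw [fst_image_cell]
    infer_instance
  refine contractibleSpace_of_convex_fibers (isOpen_cell _) fun q v hv w hw a b ha hb hab => ?_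
  exact ⟨hv.1, convex_signFiber _ _ _ _ _ hv.2 hw.2 ha hb hab⟩

/-- The image of the chart: the locus where none of the four minors `b`, `x * c - y`,
`y * e - d * x`, `d * h - y` vanishes, for base point `(x, y, d)` and fibre point `(b, c, e, h)`. -/
def minorsNonvanishing : Set ChartSpace :=
  {((x, y, d), b, c, e, h) : ChartSpace |
    b ≠ 0 ∧ x * c - y ≠ 0 ∧ y * e - d * x ≠ 0 ∧ d * h - y ≠ 0}

theorem mem_minorsNonvanishing_iff {p : ChartSpace} :
    p ∈ minorsNonvanishing ↔ ∃ β η δ κ, p.2 ∈ signFiber β η δ κ p.1 := by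
  obtain ⟨⟨x, y, d⟩, b, c, e, h⟩ := p
  have hne {t : ℝ} : t ≠ 0 ↔ ∃ ε : ℤˣ, 0 < ε • t :=
    ⟨exists_pos_units_smul, fun ⟨_, h⟩ => (smul_ne_zero_iff_ne _).mp h.ne'⟩
  simp [minorsNonvanishing, signFiber, signSolutions, hne]

theorem cell_subset_minorsNonvanishing (i : CellIndex) :
    cell i ⊆ minorsNonvanishing :=
  fun _ hp => mem_minorsNonvanishing_iff.mpr ⟨_, _, _, _, hp.2⟩

theorem units_eq_of_mem_signFiber {β η δ κ β' η' δ' κ' : ℤˣ} {q : ℝ × ℝ × ℝ}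
    {v : ℝ × ℝ × ℝ × ℝ} (h : v ∈ signFiber β η δ κ q) (h' : v ∈ signFiber β' η' δ' κ' q) :
    β = β' ∧ η = η' ∧ δ = δ' ∧ κ = κ' :=
  ⟨units_eq_of_mem_signSolutions h.1 h'.1, units_eq_of_mem_signSolutions h.2.1 h'.2.1,
    units_eq_of_mem_signSolutions h.2.2.1 h'.2.2.1, units_eq_of_mem_signSolutions h.2.2.2 h'.2.2.2⟩

theorem existsUnique_mem_cell {p : ChartSpace} (hp : p ∈ minorsNonvanishing) :
    ∃! i, p ∈ cell i := by
  obtain ⟨β, η, δ, κ, hsigns⟩ := mem_minorsNonvanishing_iff.mp hp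
  obtain ⟨hx, hy, hd⟩ := signFiber_nonempty_iff.mp ⟨p.2, hsigns⟩
  obtain ⟨s, ⟨hκ, hs⟩, hs_unique⟩ := BaseShape.existsUnique_mem_region κ hx hy hd
  refine ⟨(β, η, δ, s), ⟨hs, by rwa [hκ]⟩, ?_⟩
  rintro ⟨β', η', δ', s'⟩ ⟨hs', hsigns'⟩
  obtain ⟨rfl, rfl, rfl, hκ'⟩ := units_eq_of_mem_signFiber hsigns' hsigns
  rw [hs_unique s' ⟨hκ', hs'⟩]

section Bruhat
variable {m : ℕ} {σ : Equiv.Perm (Fin m)} {M U V : Matrix (Fin m) (Fin m) ℝ} {i j : Fin m}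

theorem mul_permMat_mul_apply (U V : Matrix (Fin m) (Fin m) ℝ) (σ : Equiv.Perm (Fin m))
    (i j : Fin m) : (U * permMat m σ * V) i j = ∑ k, U i k * V (σ k) j := by
  have hperm (k : Fin m) : (permMat m σ * V) k j = V (σ k) j := by
    simp [Matrix.mul_apply, permMat]
  simp only [Matrix.mul_assoc, Matrix.mul_apply (M := U), hperm]

theorem diag_ne_zero_of_mem_UpInv (hU : U ∈ UpInv m) (i : Fin m) : U i i ≠ 0 := by
  have hdet : ∏ k, U k k ≠ 0 := by
    rw [← det_of_isUpperTriangular fun i j hij => hU.1 i j hij]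
    exact hU.2.ne_zero
  exact Finset.prod_ne_zero_iff.mp hdet i (Finset.mem_univ i)

theorem det_eq_one_of_mem_Lo1 (hM : M ∈ Lo1 m) : M.det = 1 := by
  rw [det_of_isLowerTriangular M fun i j hij => hM.2 i j hij]
  simp [hM.1]

theorem mem_Bru_of_eq_mul (hU : ∀ i j, j < i → U i j = 0) (hV : ∀ i j, j < i → V i j = 0)
    (hdet : IsUnit M.det) (hM : M = U * permMat m σ * V) : M ∈ Bru m σ := by
  have hfactors : IsUnit (U.det * (permMat m σ).det * V.det) := by
    rwa [← Matrix.det_mul, ← Matrix.det_mul, ← hM]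
  exact ⟨U, ⟨hU, isUnit_of_mul_isUnit_left (isUnit_of_mul_isUnit_left hfactors)⟩,
    V, ⟨hV, isUnit_of_mul_isUnit_right hfactors⟩, hM⟩

theorem apply_eq_zero_of_mem_Bru (hM : M ∈ Bru m σ) (hσ : ∀ k, i ≤ k → j < σ k) : M i j = 0 := by
  obtain ⟨U, hU, V, hV, rfl⟩ := hM
  rw [mul_permMat_mul_apply]
  refine Finset.sum_eq_zero fun k _ => mul_eq_zero.mpr ?_
  exact (lt_or_ge k i).imp (hU.1 i k) fun hik => hV.1 _ _ (hσ k hik)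

theorem apply_ne_zero_of_mem_Bru (hM : M ∈ Bru m σ) (hσ : ∀ k, i < k → σ i < σ k) :
    M i (σ i) ≠ 0 := by
  obtain ⟨U, hU, V, hV, rfl⟩ := hM
  rw [mul_permMat_mul_apply, Finset.sum_eq_single i]
  · exact mul_ne_zero (diag_ne_zero_of_mem_UpInv hU _) (diag_ne_zero_of_mem_UpInv hV _)
  · refine fun k _ hki => mul_eq_zero.mpr ?_
    exact hki.lt_or_gt.imp (hU.1 i k) fun hik => hV.1 _ _ (hσ k hik)
  · exact fun hi => absurd (Finset.mem_univ i) hi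

theorem det_submatrix_eq_zero_of_mem_Bru {n : ℕ} {σ : Equiv.Perm (Fin (n + 1))}
    {M : Matrix (Fin (n + 1)) (Fin (n + 1)) ℝ} (hM : M ∈ Bru (n + 1) σ) {i : Fin n}
    (hσ : σ i.succ = Fin.last n) : (M.submatrix Fin.succ Fin.castSucc).det = 0 := by
  obtain ⟨U, hU, V, hV, rfl⟩ := hM
  have hfactor : (U * permMat (n + 1) σ * V).submatrix Fin.succ Fin.castSucc =
      U.submatrix Fin.succ Fin.succ * V.submatrix (σ ∘ Fin.succ) Fin.castSucc := by
    ext k l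
    rw [submatrix_apply, mul_permMat_mul_apply, Fin.sum_univ_succ, hU.1 k.succ 0 k.succ_pos]
    simp [Matrix.mul_apply]
  have hrow (l : Fin n) : V.submatrix (σ ∘ Fin.succ) Fin.castSucc i l = 0 := by
    simpa [hσ] using hV.1 _ _ l.castSucc_lt_last
  rw [hfactor, Matrix.det_mul, Matrix.det_eq_zero_of_row_eq_zero i hrow, mul_zero]

end Bruhat

theorem det_submatrix_ne_zero_of_mem_Bru_σ45132 {L : Matrix (Fin 5) (Fin 5) ℝ}
    (hL : L ∈ Bru 5 σ45132) : (L.submatrix ![3, 4] ![1, 2]).det ≠ 0 := by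
  obtain ⟨U, hU, V, hV, rfl⟩ := hL
  have hfactor : (U * permMat 5 σ45132 * V).submatrix ![3, 4] ![1, 2] =
      U.submatrix ![3, 4] ![3, 4] * V.submatrix ![2, 1] ![1, 2] := by
    ext i j
    have hzero (k : Fin 5) (hk : k < 3) : U (![3, 4] i) k = 0 :=
      hU.1 _ _ (hk.trans_le (by fin_cases i <;> decide))
    rw [submatrix_apply, mul_permMat_mul_apply, Fin.sum_univ_five, hzero 0 (by decide),
      hzero 1 (by decide), hzero 2 (by decide), Matrix.mul_apply, Fin.sum_univ_two]
    simp [σ45132]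
  have hUdet : (U.submatrix ![3, 4] ![3, 4]).det = U 3 3 * U 4 4 := by
    rw [det_fin_two]
    simp [hU.1 4 3]
  have hVdet : (V.submatrix ![2, 1] ![1, 2]).det = -(V 2 2 * V 1 1) := by
    rw [det_fin_two]
    simp [hV.1 2 1]
  have hUdiag := diag_ne_zero_of_mem_UpInv hU
  have hVdiag := diag_ne_zero_of_mem_UpInv hV
  rw [hfactor, Matrix.det_mul, hUdet, hVdet]
  exact mul_ne_zero (mul_ne_zero (hUdiag 3) (hUdiag 4))
    (neg_ne_zero.mpr (mul_ne_zero (hVdiag 2) (hVdiag 1)))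

/-- The coordinates of a matrix `L` in the chart of `BL 5 σ45132`. They are chosen so that the
minors defining the cell are affine in one fibre coordinate each. -/
def toChart (L : Matrix (Fin 5) (Fin 5) ℝ) : ChartSpace :=
  ((L 3 2 * L 4 3 - L 4 2, L 3 1 * L 4 3 - L 4 1, L 3 1), (L 2 0, L 2 1, L 3 2, L 4 3))

/-- The matrix with given chart coordinates. Its entry `(1, 0)` is forced by the vanishing of the
minor with rows `1, …, 4` and columns `0, …, 3`. -/
noncomputable def ofChart : ChartSpace → Matrix (Fin 5) (Fin 5) ℝ
  | ((x, y, d), b, c, e, h) =>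
    !![1, 0, 0, 0, 0;
       b * x / (x * c - y), 1, 0, 0, 0;
       b, c, 1, 0, 0;
       0, d, e, 1, 0;
       0, d * h - y, e * h - x, h, 1]

theorem toChart_ofChart (p : ChartSpace) : toChart (ofChart p) = p := by
  simp [toChart, ofChart]

theorem ofChart_mem_Lo1 (p : ChartSpace) : ofChart p ∈ Lo1 5 := by
  refine ⟨fun i => ?_, fun i j hij => ?_⟩
  · fin_cases i <;> rfl
  · fin_cases i <;> fin_cases j <;> first | rfl | exact absurd hij (by decide)

/-- The left factor in the Bruhat factorisation of `ofChart p`, found by Gaussian elimination. -/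
noncomputable def leftFactor : ChartSpace → Matrix (Fin 5) (Fin 5) ℝ
  | ((x, y, d), b, c, e, h) =>
    let u := x * c - y
    let w := y * e - d * x
    let f := d * h - y
    let g := e * h - x
    !![1, 0, 1 / b, (f - c * g) / (b * w), -c / (b * f);
       0, 1, x / u, -h / u, -y / (u * f);
       0, 0, 1, 0, 0;
       0, 0, 0, 1, d / f;
       0, 0, 0, 0, 1]

/-- The right factor in the Bruhat factorisation of `ofChart p`. -/
noncomputable def rightFactor : ChartSpace → Matrix (Fin 5) (Fin 5) ℝ
  | ((x, y, d), b, c, e, h) =>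
    let u := x * c - y
    let w := y * e - d * x
    let f := d * h - y
    let g := e * h - x
    !![b, c, 1, 0, 0;
       0, f, g, h, 1;
       0, 0, -w / f, -y / f, -d / f;
       0, 0, 0, -u / (b * w), (d - c * e) / (b * w);
       0, 0, 0, 0, -1 / u]

theorem ofChart_eq_leftFactor_mul_permMat_mul_rightFactor {p : ChartSpace}
    (hp : p ∈ minorsNonvanishing) :
    ofChart p = leftFactor p * permMat 5 σ45132 * rightFactor p := by
  obtain ⟨⟨x, y, d⟩, b, c, e, h⟩ := p
  obtain ⟨hb, hu, hw, hf⟩ := hp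
  simp only [ofChart, leftFactor, rightFactor]
  ext i j
  rw [mul_permMat_mul_apply, Fin.sum_univ_five]
  -- With the minors as atoms, `field_simp` can cancel them.
  generalize hu_def : x * c - y = u at *
  generalize hw_def : y * e - d * x = w at *
  generalize hf_def : d * h - y = f at *
  fin_cases i <;> fin_cases j <;> simp [σ45132] <;> field_simp <;> subst u w f <;> ring

theorem ofChart_mem_BL {p : ChartSpace} (hp : p ∈ minorsNonvanishing) :
    ofChart p ∈ BL 5 σ45132 := by
  have hdet : IsUnit (ofChart p).det := by
    simp [det_eq_one_of_mem_Lo1 (ofChart_mem_Lo1 p)]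
  refine ⟨ofChart_mem_Lo1 p, mem_Bru_of_eq_mul (fun i j hij => ?_) (fun i j hij => ?_) hdet
    (ofChart_eq_leftFactor_mul_permMat_mul_rightFactor hp)⟩ <;>
  · fin_cases i <;> fin_cases j <;> first | rfl | exact absurd hij (by decide)

theorem apply_zero_eq_zero_of_mem_BL {L : Matrix (Fin 5) (Fin 5) ℝ} (hL : L ∈ BL 5 σ45132)
    {i : Fin 5} (hi : 3 ≤ i) : L i 0 = 0 :=
  apply_eq_zero_of_mem_Bru hL.2 (by revert i; decide)

theorem apply_one_zero_mul_eq_of_mem_BL {L : Matrix (Fin 5) (Fin 5) ℝ} (hL : L ∈ BL 5 σ45132) :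
    L 1 0 * ((L 3 2 * L 4 3 - L 4 2) * L 2 1 - (L 3 1 * L 4 3 - L 4 1)) =
      L 2 0 * (L 3 2 * L 4 3 - L 4 2) := by
  have hdet : (L.submatrix Fin.succ Fin.castSucc).det = 0 :=
    det_submatrix_eq_zero_of_mem_Bru hL.2 (i := 0) rfl
  have hsub : L.submatrix Fin.succ Fin.castSucc =
      !![L 1 0, 1, 0, 0; L 2 0, L 2 1, 1, 0; 0, L 3 1, L 3 2, 1; 0, L 4 1, L 4 2, L 4 3] := by
    ext i j
    fin_cases i <;> fin_cases j <;> first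
      | rfl
      | exact hL.1.1 _
      | exact hL.1.2 _ _ (by decide)
      | exact apply_zero_eq_zero_of_mem_BL hL (by decide)
  have hexpand (a b c d e f g h : ℝ) :
      det !![a, 1, 0, 0; b, c, 1, 0; 0, d, e, 1; 0, f, g, h] =
        a * ((e * h - g) * c - (d * h - f)) - b * (e * h - g) := by
    simp [det_succ_row_zero, Fin.sum_univ_succ, Fin.succAbove]
    ring
  rw [hsub, hexpand] at hdet
  exact sub_eq_zero.mp hdet

theorem toChart_mem_minorsNonvanishing {L : Matrix (Fin 5) (Fin 5) ℝ} (hL : L ∈ BL 5 σ45132) :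
    toChart L ∈ minorsNonvanishing := by
  have hb : L 2 0 ≠ 0 := apply_ne_zero_of_mem_Bru hL.2 (i := 2) (by decide)
  have hf : L 4 1 ≠ 0 := apply_ne_zero_of_mem_Bru hL.2 (i := 4) (by decide)
  have hw : (L 3 1 * L 4 3 - L 4 1) * L 3 2 - L 3 1 * (L 3 2 * L 4 3 - L 4 2) ≠ 0 := by
    have hdet := det_submatrix_ne_zero_of_mem_Bru_σ45132 hL.2
    rw [det_fin_two] at hdet
    refine fun h0 => hdet ?_
    simp only [submatrix_apply, cons_val_zero, cons_val_one]
    linear_combination h0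
  refine ⟨hb, fun hu => hw ?_, hw, ?_⟩
  · have hx : L 3 2 * L 4 3 - L 4 2 = 0 := by
      refine (mul_eq_zero.mp ?_).resolve_left hb
      rw [← apply_one_zero_mul_eq_of_mem_BL hL, hu, mul_zero]
    have hy : L 3 1 * L 4 3 - L 4 1 = 0 := by
      linear_combination L 2 1 * hx - hu
    rw [hx, hy, zero_mul, mul_zero, sub_zero]
  · simpa using hf

theorem ofChart_toChart {L : Matrix (Fin 5) (Fin 5) ℝ} (hL : L ∈ BL 5 σ45132) :
    ofChart (toChart L) = L := by
  have hu := (toChart_mem_minorsNonvanishing hL).2.1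
  ext i j
  fin_cases i <;> fin_cases j <;> first
    | rfl
    | exact (hL.1.1 _).symm
    | exact (hL.1.2 _ _ (by decide)).symm
    | exact (apply_zero_eq_zero_of_mem_BL hL (by decide)).symm
    | exact (eq_div_of_mul_eq hu (apply_one_zero_mul_eq_of_mem_BL hL)).symm
    | exact sub_sub_cancel _ _

theorem continuous_toChart : Continuous toChart := by
  unfold toChart
  fun_prop

theorem continuousOn_ofChart : ContinuousOn ofChart minorsNonvanishing := by
  have hu (p : ChartSpace) (hp : p ∈ minorsNonvanishing) : p.1.1 * p.2.2.1 - p.1.2.1 ≠ 0 := hp.2.1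
  refine continuousOn_pi.mpr fun i => continuousOn_pi.mpr fun j => ?_
  fin_cases i <;> fin_cases j <;>
    simp only [ofChart, Fin.zero_eta, Fin.mk_one, Fin.reduceFinMk, of_apply, cons_val] <;>
    fun_prop (disch := assumption)

/-- The chart `L ↦ toChart L` of the Bruhat cell, as a homeomorphism onto its image. -/
noncomputable def chart : BL 5 σ45132 ≃ₜ minorsNonvanishing where
  toFun L := ⟨toChart L, toChart_mem_minorsNonvanishing L.2⟩
  invFun p := ⟨ofChart p, ofChart_mem_BL p.2⟩
  left_inv L := Subtype.ext (ofChart_toChart L.2)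
  right_inv p := Subtype.ext (toChart_ofChart p)
  continuous_toFun := (continuous_toChart.comp continuous_subtype_val).subtype_mk _
  continuous_invFun := continuousOn_ofChart.domRestrict.subtype_mk _

/-- The part of the Bruhat cell mapped by the chart to `cell i`. -/
def chartCell (i : CellIndex) : Set (BL 5 σ45132) :=
  {L | (chart L : ChartSpace) ∈ cell i}

theorem isOpen_chartCell (i : CellIndex) : IsOpen (chartCell i) :=
  (isOpen_cell i).preimage (continuous_subtype_val.comp chart.continuous)

theorem existsUnique_mem_chartCell (L : BL 5 σ45132) : ∃! i, L ∈ chartCell i :=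
  existsUnique_mem_cell (chart L).2

instance contractibleSpace_chartCell (i : CellIndex) : ContractibleSpace (chartCell i) := by
  have hemb : IsEmbedding fun L => (chart L : ChartSpace) :=
    IsEmbedding.subtypeVal.comp chart.isEmbedding
  have hrange : cell i ⊆ range fun L => (chart L : ChartSpace) := fun p hp =>
    ⟨chart.symm ⟨p, cell_subset_minorsNonvanishing i hp⟩, by simp⟩
  exact (hemb.homeomorphOfSubsetRange hrange).contractibleSpace

/-- `BL_{[45132]} ⊂ Lo¹₅` has exactly 40 connected components,
all of which are contractible. -/
theorem stmt5 :
    Nat.card (ConnectedComponents ↥(BL 5 σ45132)) = 40 ∧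
      ∀ L : ↥(BL 5 σ45132), ContractibleSpace ↥(connectedComponent L) := by
  have hconn (i : CellIndex) : IsConnected (chartCell i) :=
    isConnected_iff_connectedSpace.mpr inferInstance
  constructor
  · rw [card_connectedComponents_eq_of_existsUnique_mem isOpen_chartCell
      existsUnique_mem_chartCell hconn, Nat.card_eq_fintype_card]
    rfl
  · intro L
    obtain ⟨i, hi, -⟩ := existsUnique_mem_chartCell L
    rw [connectedComponent_eq_of_existsUnique_mem isOpen_chartCell existsUnique_mem_chartCell
      (fun j => (hconn j).isPreconnected) hi]
    infer_instance
end
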